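/- arXiv:1806.04369 — 3 statements merged into one kernel-verified Lean document; each statement's English description precedes it below -/
import Mathlib

section
/- Let p be an odd prime and let d, e, f be positive integers with either 1 ≤ d ≤ f ≤ e ≤ d+f or 1 ≤ f < d < e ≤ d+f, and let G = M₁(p,d,e,f). If d = e, the number of exact (p^e, p^e)-bicyclic pairs of G equals p^{4e−3}(p²−1)(p−1); if d < e, the number of exact (p^d, p^e)-bicyclic pairs of G equals p^{3d+e−2}(p−1)². -/
/-- Relators for the group `M₁(p,d,e,f) = ⟨a, b ∣ a^(p^e) = b^(p^d) = 1, b⁻¹ab = a^(1+p^f)⟩`,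
where `a` is generator `0` and `b` is generator `1`. -/
def M1rels (p d e f : ℕ) : Set (FreeGroup (Fin 2)) :=
  {FreeGroup.of 0 ^ p ^ e, FreeGroup.of 1 ^ p ^ d,
    (FreeGroup.of 1)⁻¹ * FreeGroup.of 0 * FreeGroup.of 1 * (FreeGroup.of 0 ^ (1 + p ^ f))⁻¹}

/-- The metacyclic group `M₁(p,d,e,f) = ⟨a, b ∣ a^(p^e) = b^(p^d) = 1, b⁻¹ab = a^(1+p^f)⟩`. -/
abbrev M1 (p d e f : ℕ) : Type := PresentedGroup (M1rels p d e f)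

/-- The canonical generator `a` of `M₁(p,d,e,f)`. -/
def M1a (p d e f : ℕ) : M1 p d e f := PresentedGroup.of 0

/-- The canonical generator `b` of `M₁(p,d,e,f)`. -/
def M1b (p d e f : ℕ) : M1 p d e f := PresentedGroup.of 1

/-- Relators for the group `M₂(p,d,e,f) = ⟨a, b ∣ a^(p^d) = b^(p^e) = 1, b⁻¹ab = a^(1+p^f)⟩`,
where `a` is generator `0` and `b` is generator `1`. -/
def M2rels (p d e f : ℕ) : Set (FreeGroup (Fin 2)) :=
  {FreeGroup.of 0 ^ p ^ d, FreeGroup.of 1 ^ p ^ e,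
    (FreeGroup.of 1)⁻¹ * FreeGroup.of 0 * FreeGroup.of 1 * (FreeGroup.of 0 ^ (1 + p ^ f))⁻¹}

/-- The metacyclic group `M₂(p,d,e,f) = ⟨a, b ∣ a^(p^d) = b^(p^e) = 1, b⁻¹ab = a^(1+p^f)⟩`. -/
abbrev M2 (p d e f : ℕ) : Type := PresentedGroup (M2rels p d e f)

/-- The canonical generator `a` of `M₂(p,d,e,f)`. -/
def M2a (p d e f : ℕ) : M2 p d e f := PresentedGroup.of 0

/-- The canonical generator `b` of `M₂(p,d,e,f)`. -/
def M2b (p d e f : ℕ) : M2 p d e f := PresentedGroup.of 1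

/-- Relators for the group
`M₃(p,d,e,h,f) = ⟨a, b ∣ a^(p^h) = 1, b^(p^(d+e-h)) = a^(p^d), b⁻¹ab = a^(1+p^f)⟩`,
where `a` is generator `0` and `b` is generator `1`. -/
def M3rels (p d e h f : ℕ) : Set (FreeGroup (Fin 2)) :=
  {FreeGroup.of 0 ^ p ^ h, FreeGroup.of 1 ^ p ^ (d + e - h) * (FreeGroup.of 0 ^ p ^ d)⁻¹,
    (FreeGroup.of 1)⁻¹ * FreeGroup.of 0 * FreeGroup.of 1 * (FreeGroup.of 0 ^ (1 + p ^ f))⁻¹}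

/-- The non-split metacyclic group
`M₃(p,d,e,h,f) = ⟨a, b ∣ a^(p^h) = 1, b^(p^(d+e-h)) = a^(p^d), b⁻¹ab = a^(1+p^f)⟩`. -/
abbrev M3 (p d e h f : ℕ) : Type := PresentedGroup (M3rels p d e h f)

/-- The canonical generator `a` of `M₃(p,d,e,h,f)`. -/
def M3a (p d e h f : ℕ) : M3 p d e h f := PresentedGroup.of 0

/-- The canonical generator `b` of `M₃(p,d,e,h,f)`. -/
def M3b (p d e h f : ℕ) : M3 p d e h f := PresentedGroup.of 1

/-- `(α, β)` is an exact `(m,n)`-bicyclic pair of `G`: `α` has order `m`, `β` has order `n`,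
`⟨α⟩ ∩ ⟨β⟩ = 1`, and `G = ⟨α⟩⟨β⟩`. -/
def IsExactBicyclicPair {G : Type*} [Group G] (m n : ℕ) (α β : G) : Prop :=
  orderOf α = m ∧ orderOf β = n ∧
    Subgroup.zpowers α ⊓ Subgroup.zpowers β = ⊥ ∧
    ∀ g : G, ∃ i j : ℤ, g = α ^ i * β ^ j

open Finset

theorem geom_sum_mul_range {A : Type*} [CommRing A] (q : A) (m n : ℕ) :
    ∑ i ∈ range (m * n), q ^ i = (∑ i ∈ range m, q ^ i) * ∑ j ∈ range n, (q ^ m) ^ j := by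
  induction n with
  | zero => simp
  | succ n ih =>
    rw [Nat.mul_succ, sum_range_add, ih, sum_range_succ _ n, mul_add, ← pow_mul, sum_mul]
    simp only [pow_add]
    rw [← mul_sum, mul_comm (q ^ (m * n))]

theorem exists_geom_sum_prime_pow_eq {A : Type*} [CommRing A] {p : ℕ} (hodd : Odd p) {q : A}
    (hq : (p : A) ∣ q - 1) (n : ℕ) :
    ∃ v : A, ∑ i ∈ range (p ^ n), q ^ i = (p : A) ^ n * (1 + p * v) := by
  induction n with
  | zero => exact ⟨0, by simp⟩
  | succ n ih =>
    obtain ⟨v, hv⟩ := ih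
    obtain ⟨m, hm⟩ : (p : A) ∣ q ^ p ^ n - 1 := hq.trans (sub_one_dvd_pow_sub_one q _)
    obtain ⟨w, hw⟩ := odd_sq_dvd_geom_sum₂_sub (a := (1 : A)) m hodd
    have h1 : q ^ p ^ n = 1 + p * m := by linear_combination hm
    refine ⟨v + w + p * v * w, ?_⟩
    rw [pow_succ p, geom_sum_mul_range, hv, h1]
    simp only [one_pow, mul_one] at hw
    linear_combination (p : A) ^ n * (1 + p * v) * hw

theorem natCast_pow_dvd_pow_sub_one {A : Type*} [CommRing A] {p : ℕ} (hodd : Odd p) {q : A}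
    {f : ℕ} (hf : 1 ≤ f) (hq : (p : A) ^ f ∣ q - 1) (n : ℕ) :
    (p : A) ^ (f + n) ∣ q ^ p ^ n - 1 := by
  obtain ⟨v, hv⟩ := exists_geom_sum_prime_pow_eq hodd
    ((dvd_pow_self (p : A) (by omega)).trans hq) n
  rw [← geom_sum_mul, hv, pow_add, mul_comm]
  exact mul_dvd_mul (Dvd.intro _ rfl) hq

/-- The split extension of an additive group `B` by the additive group of a ring `A` on which `B`
acts through multiplication by a character `R`; the pair `⟨k, l⟩` stands for `b ^ k * a ^ l`. -/
@[ext]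
structure TwistedPair {B A : Type*} [AddCommGroup B] [CommRing A]
    (R : Multiplicative B →* A) where
  base : B
  fib : A

namespace TwistedPair

variable {B A : Type*} [AddCommGroup B] [CommRing A] {R : Multiplicative B →* A}

theorem char_mul_char_neg (k : B) : R (.ofAdd k) * R (.ofAdd (-k)) = 1 := by
  rw [← map_mul, ← ofAdd_add, add_neg_cancel, ofAdd_zero, map_one]

instance : Mul (TwistedPair R) :=
  ⟨fun x y => ⟨x.base + y.base, x.fib * R (.ofAdd y.base) + y.fib⟩⟩

instance : One (TwistedPair R) := ⟨⟨0, 0⟩⟩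

instance : Inv (TwistedPair R) := ⟨fun x => ⟨-x.base, -(x.fib * R (.ofAdd (-x.base)))⟩⟩

@[simp] theorem mul_base (x y : TwistedPair R) : (x * y).base = x.base + y.base := rfl

@[simp] theorem mul_fib (x y : TwistedPair R) :
    (x * y).fib = x.fib * R (.ofAdd y.base) + y.fib := rfl

@[simp] theorem one_base : (1 : TwistedPair R).base = 0 := rfl

@[simp] theorem one_fib : (1 : TwistedPair R).fib = 0 := rfl

@[simp] theorem inv_base (x : TwistedPair R) : (x⁻¹).base = -x.base := rfl

@[simp] theorem inv_fib (x : TwistedPair R) :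
    (x⁻¹).fib = -(x.fib * R (.ofAdd (-x.base))) := rfl

instance : Group (TwistedPair R) :=
  Group.ofLeftAxioms
    (fun x y z => by
      ext
      · simp [add_assoc]
      · simp only [mul_base, mul_fib, ofAdd_add, map_mul]
        ring)
    (fun x => by ext <;> simp)
    (fun x => by
      ext
      · simp
      · have h := char_mul_char_neg (R := R) x.base
        simp only [mul_fib, inv_fib, one_fib]
        linear_combination (-x.fib) * h)

/-- The underlying set is a product. -/
def equivProd : TwistedPair R ≃ B × A where
  toFun x := (x.base, x.fib)
  invFun x := ⟨x.1, x.2⟩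
  left_inv _ := rfl
  right_inv _ := rfl

theorem pow_base (x : TwistedPair R) (n : ℕ) : (x ^ n).base = n • x.base := by
  induction n with
  | zero => simp
  | succ n ih => rw [pow_succ, mul_base, ih, succ_nsmul]

theorem pow_fib (x : TwistedPair R) (n : ℕ) :
    (x ^ n).fib = x.fib * ∑ i ∈ range n, R (.ofAdd x.base) ^ i := by
  induction n with
  | zero => simp
  | succ n ih => rw [pow_succ, mul_fib, ih, geom_sum_succ]; ring

theorem pow_eq_one_iff (x : TwistedPair R) (n : ℕ) :
    x ^ n = 1 ↔ n • x.base = 0 ∧ x.fib * ∑ i ∈ range n, R (.ofAdd x.base) ^ i = 0 := by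
  rw [TwistedPair.ext_iff, pow_base, pow_fib, one_base, one_fib]

/-- A ring homomorphism trivialising the character gives a homomorphism on the second coordinate. -/
def fibHom {C : Type*} [CommRing C] (g : A →+* C) (hg : ∀ k, g (R k) = 1) :
    TwistedPair R →* Multiplicative C where
  toFun x := .ofAdd (g x.fib)
  map_one' := by simp
  map_mul' x y := by simp [hg, ofAdd_add]

/-- An additive homomorphism gives a homomorphism on the first coordinate. -/
def baseHom {C : Type*} [AddCommGroup C] (g : B →+ C) : TwistedPair R →* Multiplicative C where
  toFun x := .ofAdd (g x.base)
  map_one' := by simp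
  map_mul' x y := by simp [ofAdd_add]

theorem map_base_zpow_mul_zpow {C : Type*} [CommRing C] (g : B →+ C) (x y : TwistedPair R)
    (m n : ℤ) : g (x ^ m * y ^ n).base = m * g x.base + n * g y.base := by
  have h : baseHom g (x ^ m * y ^ n) = baseHom g x ^ m * baseHom g y ^ n := by simp
  simpa [baseHom, zsmul_eq_mul] using congrArg Multiplicative.toAdd h

theorem map_fib_zpow_mul_zpow {C : Type*} [CommRing C] (g : A →+* C) (hg : ∀ k, g (R k) = 1)
    (x y : TwistedPair R) (m n : ℤ) :
    g (x ^ m * y ^ n).fib = m * g x.fib + n * g y.fib := by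
  have h : fibHom g hg (x ^ m * y ^ n) = fibHom g hg x ^ m * fibHom g hg y ^ n := by simp
  simpa [fibHom, zsmul_eq_mul] using congrArg Multiplicative.toAdd h

/-- If every element is a product of powers of `x` and of `y`, the determinant of their coordinates
is nonzero in every nontrivial quotient in which the action becomes trivial. -/
theorem det_ne_zero_of_forall_eq_zpow_mul_zpow {C : Type*} [CommRing C] [Nontrivial C]
    (g₁ : B →+ C) (b : B) (hb : g₁ b = 1) (g₂ : A →+* C) (hg : ∀ k, g₂ (R k) = 1)
    {x y : TwistedPair R} (h : ∀ z, ∃ m n : ℤ, z = x ^ m * y ^ n) :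
    g₁ x.base * g₂ y.fib - g₂ x.fib * g₁ y.base ≠ 0 := by
  intro h0
  obtain ⟨m, n, h₁⟩ := h ⟨b, 0⟩
  obtain ⟨m', n', h₂⟩ := h ⟨0, 1⟩
  have e₁ := map_base_zpow_mul_zpow g₁ x y m n
  have e₂ := map_fib_zpow_mul_zpow g₂ hg x y m n
  have e₃ := map_base_zpow_mul_zpow g₁ x y m' n'
  have e₄ := map_fib_zpow_mul_zpow g₂ hg x y m' n'
  rw [← h₁] at e₁ e₂
  rw [← h₂] at e₃ e₄
  simp only [hb, map_zero, map_one] at e₁ e₂ e₃ e₄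
  have key : (1 : C) = (m * n' - n * m') * (g₁ x.base * g₂ y.fib - g₂ x.fib * g₁ y.base) := by
    linear_combination (m' * g₂ x.fib + n' * g₂ y.fib) * e₁ + e₄
      - (m * g₂ x.fib + n * g₂ y.fib) * e₃
  rw [h0, mul_zero] at key
  exact one_ne_zero key

end TwistedPair

/-- The character `k ↦ r ^ k` of `ℤ/n` attached to an element `r` with `r ^ n = 1`. -/
def powCharacter {A : Type*} [CommRing A] {n : ℕ} [NeZero n] (r : A) (hr : r ^ n = 1) :
    Multiplicative (ZMod n) →* A where
  toFun k := r ^ k.toAdd.val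
  map_one' := by simp
  map_mul' k l := by
    rw [toAdd_mul, ZMod.val_add, ← pow_add, ← pow_eq_pow_mod _ hr]

theorem powCharacter_natCast {A : Type*} [CommRing A] {n : ℕ} [NeZero n] (r : A) (hr : r ^ n = 1)
    (k : ℕ) : powCharacter r hr (.ofAdd (k : ZMod n)) = r ^ k := by
  change r ^ (k : ZMod n).val = _
  rw [ZMod.val_natCast, ← pow_eq_pow_mod _ hr]

theorem dvd_powCharacter_sub_one {A : Type*} [CommRing A] {n : ℕ} [NeZero n] {r : A}
    (hr : r ^ n = 1) {c : A} (hc : c ∣ r - 1) (k : Multiplicative (ZMod n)) :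
    c ∣ powCharacter r hr k - 1 :=
  hc.trans (sub_one_dvd_pow_sub_one r _)

theorem one_add_pow_prime_pow_eq_one {p d e f : ℕ} (hodd : Odd p) (hf : 1 ≤ f) (hef : e ≤ d + f) :
    (1 + (p : ZMod (p ^ e)) ^ f) ^ p ^ d = 1 := by
  have h := natCast_pow_dvd_pow_sub_one (A := ZMod (p ^ e)) hodd hf
    (q := 1 + (p : ZMod (p ^ e)) ^ f) (by simp) d
  have h0 : (p : ZMod (p ^ e)) ^ (f + d) = 0 := by
    rw [← Nat.cast_pow, ZMod.natCast_eq_zero_iff]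
    exact pow_dvd_pow p (by omega)
  rw [h0, zero_dvd_iff, sub_eq_zero] at h
  exact h

theorem pow_val_natCast {G : Type*} [Monoid G] {n : ℕ} {x : G} (hx : x ^ n = 1) (k : ℕ) :
    x ^ (k : ZMod n).val = x ^ k := by
  rw [ZMod.val_natCast, ← pow_eq_pow_mod _ hx]

theorem pow_mul_pow_eq_of_conj {G : Type*} [Group G] {a b : G} {s : ℕ}
    (h : b⁻¹ * a * b = a ^ s) (j k : ℕ) : a ^ j * b ^ k = b ^ k * a ^ (j * s ^ k) := by
  have h1 : ∀ j : ℕ, a ^ j * b = b * a ^ (j * s) := by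
    intro j
    have h2 := conj_pow (i := j) (a := b⁻¹) (b := a)
    rw [inv_inv, h, ← pow_mul] at h2
    rw [mul_comm j s, h2]
    group
  induction k with
  | zero => simp
  | succ k ih => rw [pow_succ, ← mul_assoc, ih, mul_assoc, h1, ← mul_assoc, mul_assoc j, ← pow_succ,
    ← pow_succ]

theorem M1a_pow (p d e f : ℕ) : M1a p d e f ^ p ^ e = 1 := by
  have h := PresentedGroup.one_of_mem
    (show FreeGroup.of 0 ^ p ^ e ∈ M1rels p d e f by simp [M1rels])
  simpa [M1a, PresentedGroup.of] using h

theorem M1b_pow (p d e f : ℕ) : M1b p d e f ^ p ^ d = 1 := by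
  have h := PresentedGroup.one_of_mem
    (show FreeGroup.of 1 ^ p ^ d ∈ M1rels p d e f by simp [M1rels])
  simpa [M1b, PresentedGroup.of] using h

theorem M1_conj (p d e f : ℕ) :
    (M1b p d e f)⁻¹ * M1a p d e f * M1b p d e f = M1a p d e f ^ (1 + p ^ f) := by
  have h := PresentedGroup.one_of_mem
    (show (FreeGroup.of 1)⁻¹ * FreeGroup.of 0 * FreeGroup.of 1 * (FreeGroup.of 0 ^ (1 + p ^ f))⁻¹
      ∈ M1rels p d e f by simp [M1rels])
  rw [map_mul, map_inv, mul_inv_eq_one] at h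
  simpa [M1a, M1b, PresentedGroup.of] using h

/-- The concrete model of `M₁(p,d,e,f)`. -/
abbrev M1Model (p d e f : ℕ) [NeZero p]
    (h : (1 + (p : ZMod (p ^ e)) ^ f) ^ p ^ d = 1) : Type :=
  TwistedPair (powCharacter (n := p ^ d) (1 + (p : ZMod (p ^ e)) ^ f) h)

section Model

variable {p d e f : ℕ} [NeZero p] (h : (1 + (p : ZMod (p ^ e)) ^ f) ^ p ^ d = 1)

/-- The homomorphism from the concrete model to the presented group. -/
def M1ofModel : M1Model p d e f h →* M1 p d e f :=
  MonoidHom.mk' (fun x => M1b p d e f ^ x.base.val * M1a p d e f ^ x.fib.val) (by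
    rintro ⟨i, j⟩ ⟨k, l⟩
    have h1 : i + k = ((i.val + k.val : ℕ) : ZMod (p ^ d)) := by simp
    have h2 : j * powCharacter (n := p ^ d) (1 + (p : ZMod (p ^ e)) ^ f) h (.ofAdd k) + l
        = ((j.val * (1 + p ^ f) ^ k.val + l.val : ℕ) : ZMod (p ^ e)) := by
      simp [powCharacter]
    simp only [TwistedPair.mul_base, TwistedPair.mul_fib]
    have h3 := pow_mul_pow_eq_of_conj (M1_conj p d e f) j.val k.val
    rw [h1, h2, pow_val_natCast (M1b_pow p d e f), pow_val_natCast (M1a_pow p d e f), pow_add,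
      pow_add, mul_assoc, ← mul_assoc (_ ^ k.val), ← h3]
    simp only [mul_assoc])

/-- The homomorphism from the presented group to the concrete model. -/
def M1toModel : M1 p d e f →* M1Model p d e f h :=
  PresentedGroup.toGroup (f := ![⟨0, 1⟩, ⟨1, 0⟩]) (by
    intro r hr
    simp only [M1rels, Set.mem_insert_iff, Set.mem_singleton_iff] at hr
    rcases hr with rfl | rfl | rfl
    · simp [TwistedPair.pow_eq_one_iff]
    · simp [TwistedPair.pow_eq_one_iff]
    · simp only [map_mul, map_inv, map_pow, FreeGroup.lift_apply_of, mul_inv_eq_one]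
      rw [mul_assoc, inv_mul_eq_iff_eq_mul]
      have h1 := powCharacter_natCast (n := p ^ d) (1 + (p : ZMod (p ^ e)) ^ f) h 1
      simp only [Nat.cast_one, pow_one] at h1
      ext
      · simp [TwistedPair.pow_base]
      · simp [TwistedPair.pow_fib, h1])

/-- The presented group is isomorphic to its concrete model. -/
def M1equivModel : M1 p d e f ≃* M1Model p d e f h :=
  MonoidHom.toMulEquiv (M1toModel h) (M1ofModel h)
    (by
      ext x
      fin_cases x
      · have h1 := pow_val_natCast (M1a_pow p d e f) 1
        simpa [M1toModel, M1ofModel, M1a] using h1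
      · have h1 := pow_val_natCast (M1b_pow p d e f) 1
        simpa [M1toModel, M1ofModel, M1b] using h1)
    (by
      ext x
      · simp [M1toModel, M1ofModel, M1a, M1b, TwistedPair.pow_base]
      · simp [M1toModel, M1ofModel, M1a, M1b, TwistedPair.pow_fib, TwistedPair.pow_base])

end Model
theorem IsExactBicyclicPair.map_mulEquiv {G H : Type*} [Group G] [Group H] (φ : G ≃* H) {m n : ℕ}
    {x y : G} (h : IsExactBicyclicPair m n x y) : IsExactBicyclicPair m n (φ x) (φ y) := by
  obtain ⟨h1, h2, h3, h4⟩ := h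
  refine ⟨by rw [φ.orderOf_eq, h1], by rw [φ.orderOf_eq, h2], ?_, fun g => ?_⟩
  · have hx := MonoidHom.map_zpowers φ.toMonoidHom x
    have hy := MonoidHom.map_zpowers φ.toMonoidHom y
    simp only [MulEquiv.toMonoidHom_eq_coe, MonoidHom.coe_coe] at hx hy
    rw [← hx, ← hy, ← Subgroup.map_inf _ _ _ φ.injective, h3, Subgroup.map_bot]
  · obtain ⟨i, j, hij⟩ := h4 (φ.symm g)
    exact ⟨i, j, by rw [← map_zpow, ← map_zpow, ← map_mul, ← hij, φ.apply_symm_apply]⟩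

theorem card_isExactBicyclicPair_congr {G H : Type*} [Group G] [Group H] (φ : G ≃* H) (m n : ℕ) :
    Nat.card {x : G × G // IsExactBicyclicPair m n x.1 x.2} =
      Nat.card {x : H × H // IsExactBicyclicPair m n x.1 x.2} :=
  Nat.card_congr ((φ.toEquiv.prodCongr φ.toEquiv).subtypeEquiv fun x =>
    ⟨fun h => h.map_mulEquiv φ, fun h => by simpa using h.map_mulEquiv φ.symm⟩)

section PrimePower

variable {p : ℕ} [Fact p.Prime]

theorem ZMod.isUnit_iff_castHom_ne_zero {e : ℕ} (he : e ≠ 0) (x : ZMod (p ^ e)) :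
    IsUnit x ↔ ZMod.castHom (dvd_pow_self p he) (ZMod p) x ≠ 0 := by
  obtain ⟨n, rfl⟩ := ZMod.natCast_zmod_surjective x
  rw [map_natCast, Ne, ZMod.natCast_eq_zero_iff, ZMod.isUnit_iff_coprime,
    Nat.coprime_pow_right_iff (Nat.pos_of_ne_zero he), Nat.coprime_comm,
    (Fact.out : p.Prime).coprime_iff_not_dvd]

theorem ZMod.prime_pow_eq_zero_iff {e n : ℕ} : (p : ZMod (p ^ e)) ^ n = 0 ↔ e ≤ n := by
  rw [← Nat.cast_pow, ZMod.natCast_eq_zero_iff,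
    Nat.pow_dvd_pow_iff_le_right (Fact.out : p.Prime).one_lt]

theorem ZMod.card_isUnit {e : ℕ} (he : 1 ≤ e) :
    Nat.card {x : ZMod (p ^ e) // IsUnit x} = p ^ (e - 1) * (p - 1) := by
  rw [← Nat.totient_prime_pow (Fact.out : p.Prime) he, ← ZMod.card_units_eq_totient,
    ← Nat.card_eq_fintype_card]
  exact Nat.card_congr (Equiv.ofBijective 
    (fun u : (ZMod (p ^ e))ˣ => (⟨u, u.isUnit⟩ : {x : ZMod (p ^ e) // IsUnit x}))
    ⟨fun u v huv => Units.ext (congrArg Subtype.val huv), fun ⟨_, u, hu⟩ => ⟨u, Subtype.ext hu⟩⟩).symm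

theorem ZMod.card_prime_pow_mul_eq_zero {d e : ℕ} (hde : d ≤ e) :
    Nat.card {x : ZMod (p ^ e) // (p : ZMod (p ^ e)) ^ d * x = 0} = p ^ d := by
  have hp : 0 < p := (Fact.out : p.Prime).pos
  have hmem : ∀ x : ZMod (p ^ e), (p : ZMod (p ^ e)) ^ d * x = 0 ↔
      x ∈ AddSubgroup.zmultiples ((p ^ (e - d) : ℕ) : ZMod (p ^ e)) := by
    intro x
    rw [AddSubgroup.mem_zmultiples_iff]
    constructor
    · obtain ⟨n, rfl⟩ := ZMod.natCast_zmod_surjective x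
      intro h
      rw [← Nat.cast_pow, ← Nat.cast_mul, ZMod.natCast_eq_zero_iff] at h
      rw [← Nat.add_sub_of_le hde, pow_add, Nat.mul_dvd_mul_iff_left (pow_pos hp d)] at h
      obtain ⟨k, rfl⟩ : p ^ (e - d) ∣ n := by simpa using h
      exact ⟨k, by simp [mul_comm]⟩
    · rintro ⟨k, rfl⟩
      have h0 : (p : ZMod (p ^ e)) ^ d * (p : ZMod (p ^ e)) ^ (e - d) = 0 := by
        rw [← pow_add, ZMod.prime_pow_eq_zero_iff]; omega
      rw [zsmul_eq_mul, Nat.cast_pow]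
      linear_combination (k : ZMod (p ^ e)) * h0
  rw [Nat.card_congr (Equiv.subtypeEquivRight hmem)]
  refine (Nat.card_zmultiples _).trans ?_
  rw [ZMod.addOrderOf_coe _ (pow_pos hp e).ne', Nat.gcd_eq_right (pow_dvd_pow p (by omega)),
    Nat.pow_div (by omega) hp]
  congr 1
  omega

theorem exists_isUnit_geom_sum_eq (hodd : Odd p) {e : ℕ} (he : e ≠ 0) {q : ZMod (p ^ e)}
    (hq : (p : ZMod (p ^ e)) ∣ q - 1) (n : ℕ) :
    ∃ u, IsUnit u ∧ ∑ i ∈ range (p ^ n), q ^ i = (p : ZMod (p ^ e)) ^ n * u := by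
  obtain ⟨v, hv⟩ := exists_geom_sum_prime_pow_eq hodd hq n
  refine ⟨_, ?_, hv⟩
  rw [ZMod.isUnit_iff_castHom_ne_zero he]
  simp [-ZMod.castHom_apply]

variable {d e f : ℕ} (h : (1 + (p : ZMod (p ^ e)) ^ f) ^ p ^ d = 1)

theorem M1Model.pow_prime_pow_eq_one_iff (hodd : Odd p) (he : e ≠ 0) (hf : 1 ≤ f)
    (x : M1Model p d e f h) (n : ℕ) :
    x ^ p ^ n = 1 ↔ (p : ZMod (p ^ d)) ^ n * x.base = 0 ∧ (p : ZMod (p ^ e)) ^ n * x.fib = 0 := by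
  obtain ⟨u, hu, hs⟩ := exists_isUnit_geom_sum_eq hodd he (dvd_powCharacter_sub_one h
    (by simpa using dvd_pow_self (p : ZMod (p ^ e)) (by omega : f ≠ 0)) (.ofAdd x.base)) n
  rw [TwistedPair.pow_eq_one_iff, hs, ← mul_assoc, mul_comm x.fib, hu.mul_left_eq_zero,
    nsmul_eq_mul, Nat.cast_pow]

theorem M1Model.card : Nat.card (M1Model p d e f h) = p ^ d * p ^ e := by
  rw [Nat.card_congr TwistedPair.equivProd, Nat.card_prod, Nat.card_zmod, Nat.card_zmod]

theorem M1Model.castHom_powCharacter (hf : 1 ≤ f) (he : e ≠ 0) (k : Multiplicative (ZMod (p ^ d))) :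
    ZMod.castHom (dvd_pow_self p he) (ZMod p)
      (powCharacter (n := p ^ d) (1 + (p : ZMod (p ^ e)) ^ f) h k) = 1 := by
  obtain ⟨c, hc⟩ := dvd_powCharacter_sub_one h (c := (p : ZMod (p ^ e)))
    (by simpa only [add_sub_cancel_left] using dvd_pow_self (p : ZMod (p ^ e)) (by omega : f ≠ 0)) k
  rw [sub_eq_iff_eq_add] at hc
  rw [hc]
  simp [-ZMod.castHom_apply]

theorem M1Model.det_ne_zero (hf : 1 ≤ f) (hd : d ≠ 0) (he : e ≠ 0) {x y : M1Model p d e f h}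
    (hxy : ∀ z, ∃ m n : ℤ, z = x ^ m * y ^ n) :
    ZMod.castHom (dvd_pow_self p hd) (ZMod p) x.base *
        ZMod.castHom (dvd_pow_self p he) (ZMod p) y.fib -
      ZMod.castHom (dvd_pow_self p he) (ZMod p) x.fib *
        ZMod.castHom (dvd_pow_self p hd) (ZMod p) y.base ≠ 0 :=
  TwistedPair.det_ne_zero_of_forall_eq_zpow_mul_zpow
    (ZMod.castHom (dvd_pow_self p hd) (ZMod p)).toAddMonoidHom 1
    (map_one (ZMod.castHom (dvd_pow_self p hd) (ZMod p)))
    (ZMod.castHom (dvd_pow_self p he) (ZMod p)) (M1Model.castHom_powCharacter h hf he) hxy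

theorem M1Model.isExactBicyclicPair_iff_of_lt (hodd : Odd p) (hf : 1 ≤ f) (hd : d ≠ 0) (hde : d < e)
    (x y : M1Model p d e f h) :
    IsExactBicyclicPair (p ^ d) (p ^ e) x y ↔
      IsUnit x.base ∧ (p : ZMod (p ^ e)) ^ d * x.fib = 0 ∧ IsUnit y.fib := by
  have he : e ≠ 0 := by omega
  constructor
  · rintro ⟨hx, -, -, hxy⟩
    have hxf := ((M1Model.pow_prime_pow_eq_one_iff h hodd he hf x d).mp
      (orderOf_dvd_iff_pow_eq_one.mp (dvd_of_eq hx))).2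
    have hxf0 : ZMod.castHom (dvd_pow_self p he) (ZMod p) x.fib = 0 := by
      by_contra hu
      rw [← ne_eq, ← ZMod.isUnit_iff_castHom_ne_zero he] at hu
      rw [hu.mul_left_eq_zero, ZMod.prime_pow_eq_zero_iff] at hxf
      omega
    have hdet := M1Model.det_ne_zero h hf hd he hxy
    rw [hxf0, zero_mul, sub_zero] at hdet
    exact ⟨(ZMod.isUnit_iff_castHom_ne_zero hd _).mpr (left_ne_zero_of_mul hdet), hxf,
      (ZMod.isUnit_iff_castHom_ne_zero he _).mpr (right_ne_zero_of_mul hdet)⟩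
  · rintro ⟨hx, hxf, hy⟩
    have hbase : ∀ (z : M1Model p d e f h) (m : ℤ), (z ^ m).base = m * z.base := fun z m => by
      simpa using TwistedPair.map_base_zpow_mul_zpow (AddMonoidHom.id _) z 1 m 0
    have hxo : orderOf x = p ^ d := by
      refine Nat.dvd_antisymm (orderOf_dvd_of_pow_eq_one ?_) ?_
      · rw [M1Model.pow_prime_pow_eq_one_iff h hodd he hf]
        exact ⟨by rw [ZMod.prime_pow_eq_zero_iff.mpr le_rfl, zero_mul], hxf⟩
      · have h1 := ((TwistedPair.pow_eq_one_iff x _).mp (pow_orderOf_eq_one x)).1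
        rwa [nsmul_eq_mul, hx.mul_left_eq_zero, ZMod.natCast_eq_zero_iff] at h1
    have hyo : orderOf y = p ^ e := by
      obtain ⟨n, rfl⟩ := Nat.exists_eq_succ_of_ne_zero he
      refine orderOf_eq_prime_pow ?_ ?_
      · rw [M1Model.pow_prime_pow_eq_one_iff h hodd he hf, hy.mul_left_eq_zero,
          ZMod.prime_pow_eq_zero_iff]
        omega
      · rw [M1Model.pow_prime_pow_eq_one_iff h hodd he hf, hy.mul_left_eq_zero,
          ZMod.prime_pow_eq_zero_iff, ZMod.prime_pow_eq_zero_iff.mpr (by omega), zero_mul]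
        exact ⟨rfl, le_rfl⟩
    have hprime : ∀ g ∈ Subgroup.zpowers x ⊓ Subgroup.zpowers y, g ^ p = 1 → g = 1 := by
      rintro g ⟨⟨m, rfl⟩, ⟨n, hn⟩⟩ hg
      simp only at hn hg ⊢
      have h1 : (p : ℤ) ^ d ∣ n := by
        rw [← hn, ← zpow_natCast, ← zpow_mul, ← orderOf_dvd_iff_zpow_eq_one, hyo] at hg
        obtain ⟨k, rfl⟩ := Nat.exists_eq_succ_of_ne_zero he
        rw [pow_succ, Nat.cast_mul, Nat.cast_pow] at hg
        have h2 := Int.dvd_of_mul_dvd_mul_right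
          (Int.natCast_ne_zero.mpr (Fact.out : p.Prime).ne_zero) hg
        exact (pow_dvd_pow _ (by omega)).trans h2
      have h2 : (m : ZMod (p ^ d)) * x.base = 0 := by
        rw [← hbase, ← hn, hbase, (ZMod.intCast_zmod_eq_zero_iff_dvd n (p ^ d)).mpr (by simpa using h1),
          zero_mul]
      rw [hx.mul_left_eq_zero, ZMod.intCast_zmod_eq_zero_iff_dvd] at h2
      rwa [← orderOf_dvd_iff_zpow_eq_one, hxo]
    have hpow : ∀ (t : ℕ), ∀ g ∈ Subgroup.zpowers x ⊓ Subgroup.zpowers y,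
        g ^ p ^ t = 1 → g = 1 := by
      intro t
      induction t with
      | zero => intro g _ hg; simpa using hg
      | succ t ih =>
        intro g hg h1
        rw [pow_succ', pow_mul] at h1
        exact hprime g hg (ih _ (Subgroup.pow_mem _ hg p) h1)
    have hinf : Subgroup.zpowers x ⊓ Subgroup.zpowers y = ⊥ := by
      rw [Subgroup.eq_bot_iff_forall]
      rintro g hg
      obtain ⟨m, rfl⟩ := hg.1
      refine hpow d _ hg ?_
      simp only
      rw [← zpow_natCast, zpow_comm, zpow_natCast, orderOf_dvd_iff_pow_eq_one.mp (dvd_of_eq hxo), one_zpow]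
    have : Finite (M1Model p d e f h) := Finite.of_equiv _ TwistedPair.equivProd.symm
    have hcompl : Subgroup.IsComplement' (Subgroup.zpowers x) (Subgroup.zpowers y) :=
      Subgroup.isComplement'_of_card_mul_and_disjoint
        (by rw [Nat.card_zpowers, Nat.card_zpowers, hxo, hyo, M1Model.card])
        (disjoint_iff.mpr hinf)
    refine ⟨hxo, hyo, hinf, fun g => ?_⟩
    obtain ⟨⟨⟨_, m, rfl⟩, ⟨_, n, rfl⟩⟩, rfl⟩ := hcompl.2 g
    exact ⟨m, n, rfl⟩

theorem M1Model.card_isExactBicyclicPair_of_lt (hodd : Odd p) (hf : 1 ≤ f) (hd : 1 ≤ d)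
    (hde : d < e) :
    Nat.card {x : M1Model p d e f h × M1Model p d e f h //
      IsExactBicyclicPair (p ^ d) (p ^ e) x.1 x.2} = p ^ (3 * d + e - 2) * (p - 1) ^ 2 := by
  have key : Nat.card {x : M1Model p d e f h × M1Model p d e f h //
      IsExactBicyclicPair (p ^ d) (p ^ e) x.1 x.2} =
      Nat.card (({i : ZMod (p ^ d) // IsUnit i} ×
        {j : ZMod (p ^ e) // (p : ZMod (p ^ e)) ^ d * j = 0}) ×
        (ZMod (p ^ d) × {l : ZMod (p ^ e) // IsUnit l})) :=
    Nat.card_congr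
      { toFun := fun x =>
          have hx := (M1Model.isExactBicyclicPair_iff_of_lt h hodd hf (by omega) hde _ _).mp x.2
          ((⟨x.1.1.base, hx.1⟩, ⟨x.1.1.fib, hx.2.1⟩), (x.1.2.base, ⟨x.1.2.fib, hx.2.2⟩))
        invFun := fun v => ⟨(⟨v.1.1, v.1.2⟩, ⟨v.2.1, v.2.2⟩),
          (M1Model.isExactBicyclicPair_iff_of_lt h hodd hf (by omega) hde _ _).mpr
            ⟨v.1.1.2, v.1.2.2, v.2.2.2⟩⟩
        left_inv := fun _ => rfl
        right_inv := fun _ => rfl }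
  rw [key, Nat.card_prod, Nat.card_prod, Nat.card_prod, ZMod.card_isUnit hd,
    ZMod.card_isUnit (by omega), ZMod.card_prime_pow_mul_eq_zero hde.le, Nat.card_zmod,
    show 3 * d + e - 2 = (d - 1) + d + d + (e - 1) by omega]
  ring

theorem M1Model.isExactBicyclicPair_iff_of_eq (hodd : Odd p) (he : e ≠ 0)
    (h : (1 + (p : ZMod (p ^ e)) ^ e) ^ p ^ e = 1) (x y : M1Model p e e e h) :
    IsExactBicyclicPair (p ^ e) (p ^ e) x y ↔
      ZMod.castHom (dvd_pow_self p he) (ZMod p) (x.base * y.fib - x.fib * y.base) ≠ 0 := by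
  constructor
  · rintro ⟨-, -, -, hxy⟩
    rw [map_sub, map_mul, map_mul]
    exact M1Model.det_ne_zero h (by omega) he he hxy
  · intro hdet
    rw [← ZMod.isUnit_iff_castHom_ne_zero he] at hdet
    have hp0 : (p : ZMod (p ^ e)) ^ e = 0 := ZMod.prime_pow_eq_zero_iff.mpr le_rfl
    have hR : ∀ k, RingHom.id _ (powCharacter (n := p ^ e) (1 + (p : ZMod (p ^ e)) ^ e) h k) = 1 :=
      fun k => by simp [powCharacter, hp0]
    have hbase : ∀ m n : ℤ, (x ^ m * y ^ n).base = m * x.base + n * y.base :=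
      TwistedPair.map_base_zpow_mul_zpow (AddMonoidHom.id _) x y
    have hfib : ∀ m n : ℤ, (x ^ m * y ^ n).fib = m * x.fib + n * y.fib :=
      TwistedPair.map_fib_zpow_mul_zpow (RingHom.id _) hR x y
    have hfree : ∀ m n : ℤ, x ^ m * y ^ n = 1 →
        ((p ^ e : ℕ) : ℤ) ∣ m ∧ ((p ^ e : ℕ) : ℤ) ∣ n := by
      intro m n hmn
      have h1 := hbase m n
      have h2 := hfib m n
      rw [hmn, TwistedPair.one_base] at h1
      rw [hmn, TwistedPair.one_fib] at h2
      simp only [← ZMod.intCast_zmod_eq_zero_iff_dvd]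
      constructor
      · refine hdet.mul_left_eq_zero.mp ?_
        linear_combination y.base * h2 - y.fib * h1
      · refine hdet.mul_left_eq_zero.mp ?_
        linear_combination x.fib * h1 - x.base * h2
    have hpow : ∀ z : M1Model p e e e h, z ^ p ^ e = 1 := fun z => by
      rw [M1Model.pow_prime_pow_eq_one_iff h hodd he (by omega)]
      exact ⟨mul_eq_zero_of_left hp0 _, mul_eq_zero_of_left hp0 _⟩
    refine ⟨Nat.dvd_antisymm (orderOf_dvd_of_pow_eq_one (hpow x)) ?_,
      Nat.dvd_antisymm (orderOf_dvd_of_pow_eq_one (hpow y)) ?_, ?_, fun g => ?_⟩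
    · exact Int.natCast_dvd_natCast.mp (hfree (orderOf x) 0 (by simp [pow_orderOf_eq_one])).1
    · exact Int.natCast_dvd_natCast.mp (hfree 0 (orderOf y) (by simp [pow_orderOf_eq_one])).2
    · rw [Subgroup.eq_bot_iff_forall]
      rintro _ ⟨⟨m, rfl⟩, ⟨n, hn⟩⟩
      simp only at hn ⊢
      obtain ⟨k, rfl⟩ := (hfree m (-n) (by rw [← hn, zpow_neg, mul_inv_cancel])).1
      rw [zpow_mul, zpow_natCast, hpow, one_zpow]
    · obtain ⟨u, hu⟩ := hdet
      have hu1 : (↑u⁻¹ : ZMod (p ^ e)) * (x.base * y.fib - x.fib * y.base) = 1 := by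
        rw [← hu, Units.inv_mul]
      obtain ⟨m, hm⟩ := ZMod.intCast_surjective
        ((↑u⁻¹ : ZMod (p ^ e)) * (g.base * y.fib - g.fib * y.base))
      obtain ⟨n, hn⟩ := ZMod.intCast_surjective
        ((↑u⁻¹ : ZMod (p ^ e)) * (x.base * g.fib - x.fib * g.base))
      refine ⟨m, n, TwistedPair.ext ?_ ?_⟩
      · rw [hbase, hm, hn]
        linear_combination (-g.base) * hu1
      · rw [hfib, hm, hn]
        linear_combination (-g.fib) * hu1

theorem card_subtype_comp_mul_card {A B : Type*} [AddGroup A] [AddGroup B] [Finite B]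
    (g : A →+ B) (hg : Function.Surjective g) (P : B → Prop) :
    Nat.card {a // P (g a)} * Nat.card B = Nat.card A * Nat.card {b // P b} := by
  have hfib : ∀ Q : B → Prop, Nat.card {a // Q (g a)} = Nat.card {b // Q b} * Nat.card g.ker := by
    intro Q
    rw [← Nat.card_prod]
    refine Nat.card_congr ((Equiv.sigmaFiberEquiv
      (fun a : {a // Q (g a)} => (⟨g a, a.2⟩ : {b // Q b}))).symm.trans
      ((Equiv.sigmaCongrRight fun b => ?_).trans (Equiv.sigmaEquivProd _ _)))
    refine Equiv.trans ?_ (AddMonoidHom.fiberEquivKerOfSurjective hg b.1)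
    exact
      { toFun := fun a => ⟨a.1.1, congrArg Subtype.val a.2⟩
        invFun := fun a => ⟨⟨a.1, by
          have h1 : g a.1 = b.1 := a.2
          rw [h1]
          exact b.2⟩, Subtype.ext a.2⟩
        left_inv := fun _ => rfl
        right_inv := fun _ => rfl }
  have hA := hfib fun _ => True
  rw [Nat.card_congr (Equiv.subtypeUnivEquiv fun _ => trivial),
    Nat.card_congr (Equiv.subtypeUnivEquiv fun _ => trivial)] at hA
  rw [hfib, hA]
  ring

theorem Matrix.card_det_ne_zero_fin_two :
    Nat.card {M : Matrix (Fin 2) (Fin 2) (ZMod p) // M.det ≠ 0} = (p ^ 2 - 1) * (p ^ 2 - p) := by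
  have h1 := Matrix.card_GL_field (𝔽 := ZMod p) 2
  simp only [Fin.prod_univ_two, ZMod.card, Fin.val_zero, Fin.val_one, pow_zero, pow_one] at h1
  rw [← h1]
  refine Nat.card_congr (Equiv.ofBijective (fun u : GL (Fin 2) (ZMod p) =>
    (⟨u.val, ((Matrix.isUnit_iff_isUnit_det _).mp u.isUnit).ne_zero⟩ :
      {M : Matrix (Fin 2) (Fin 2) (ZMod p) // M.det ≠ 0})) ⟨?_, ?_⟩).symm
  · exact fun u v huv => Units.ext (congrArg Subtype.val huv)
  · rintro ⟨M, hM⟩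
    obtain ⟨u, hu⟩ := (Matrix.isUnit_iff_isUnit_det M).mpr (isUnit_iff_ne_zero.mpr hM)
    exact ⟨u, Subtype.ext hu⟩

theorem M1Model.card_isExactBicyclicPair_of_eq (hodd : Odd p) (he : 1 ≤ e)
    (h : (1 + (p : ZMod (p ^ e)) ^ e) ^ p ^ e = 1) :
    Nat.card {x : M1Model p e e e h × M1Model p e e e h //
      IsExactBicyclicPair (p ^ e) (p ^ e) x.1 x.2} =
      p ^ (4 * e - 3) * (p ^ 2 - 1) * (p - 1) := by
  have he0 : e ≠ 0 := by omega
  have hp : 0 < p := (Fact.out : p.Prime).pos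
  let c := ZMod.castHom (dvd_pow_self p he0) (ZMod p)
  let g : Matrix (Fin 2) (Fin 2) (ZMod (p ^ e)) →+ Matrix (Fin 2) (Fin 2) (ZMod p) :=
    c.toAddMonoidHom.mapMatrix
  have hg : Function.Surjective g := by
    intro M
    choose F hF using fun i j => ZMod.castHom_surjective (dvd_pow_self p he0) (M i j)
    exact ⟨Matrix.of F, by ext i j; exact hF i j⟩
  have key : Nat.card {x : M1Model p e e e h × M1Model p e e e h //
      IsExactBicyclicPair (p ^ e) (p ^ e) x.1 x.2} = Nat.card {M // (g M).det ≠ 0} :=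
    Nat.card_congr
      { toFun := fun x => ⟨!![x.1.1.base, x.1.1.fib; x.1.2.base, x.1.2.fib], by
          have hx := (M1Model.isExactBicyclicPair_iff_of_eq hodd he0 h _ _).mp x.2
          rw [map_sub, map_mul, map_mul] at hx
          rw [Matrix.det_fin_two]
          exact hx⟩
        invFun := fun M => ⟨(⟨M.1 0 0, M.1 0 1⟩, ⟨M.1 1 0, M.1 1 1⟩), by
          have hM := M.2
          rw [Matrix.det_fin_two] at hM
          rw [M1Model.isExactBicyclicPair_iff_of_eq hodd he0 h, map_sub, map_mul, map_mul]
          exact hM⟩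
        left_inv := fun _ => rfl
        right_inv := fun M => Subtype.ext (Matrix.eta_fin_two M.1).symm }
  have hcount := card_subtype_comp_mul_card g hg fun M => M.det ≠ 0
  rw [← key, Matrix.card_det_ne_zero_fin_two] at hcount
  simp only [Matrix, Nat.card_fun, Nat.card_zmod, Nat.card_eq_fintype_card (α := Fin 2),
    Fintype.card_fin] at hcount
  refine Nat.eq_of_mul_eq_mul_right (pow_pos (pow_pos hp 2) 2) (hcount.trans ?_)
  obtain ⟨n, rfl⟩ := Nat.exists_eq_add_of_le' he
  rw [show p ^ 2 - p = p * (p - 1) by rw [Nat.mul_sub, mul_one, sq],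
    show 4 * (n + 1) - 3 = 4 * n + 1 by omega]
  ring

end PrimePower

/-- The number of exact `(p^d,p^e)`-bicyclic pairs of `M₁(p,d,e,f)` is
`p^(4e-3)(p²-1)(p-1)` if `d = e`, and `p^(3d+e-2)(p-1)²` if `d < e`. -/
theorem stmt_8 (p d e f : ℕ) (hp : p.Prime) (hodd : Odd p)
    (hcond : (1 ≤ d ∧ d ≤ f ∧ f ≤ e ∧ e ≤ d + f) ∨ (1 ≤ f ∧ f < d ∧ d < e ∧ e ≤ d + f)) :
    (d = e →
      Nat.card {x : M1 p d e f × M1 p d e f // IsExactBicyclicPair (p ^ d) (p ^ e) x.1 x.2} =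
        p ^ (4 * e - 3) * (p ^ 2 - 1) * (p - 1)) ∧
    (d < e →
      Nat.card {x : M1 p d e f × M1 p d e f // IsExactBicyclicPair (p ^ d) (p ^ e) x.1 x.2} =
        p ^ (3 * d + e - 2) * (p - 1) ^ 2) := by
  have : Fact p.Prime := ⟨hp⟩
  have hd : 1 ≤ d := by omega
  have hf : 1 ≤ f := by omega
  have hr : (1 + (p : ZMod (p ^ e)) ^ f) ^ p ^ d = 1 :=
    one_add_pow_prime_pow_eq_one hodd hf (by omega)
  rw [card_isExactBicyclicPair_congr (M1equivModel hr)]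
  constructor
  · intro hde
    obtain rfl : f = e := by omega
    subst hde
    exact M1Model.card_isExactBicyclicPair_of_eq hodd hd hr
  · intro hde
    exact M1Model.card_isExactBicyclicPair_of_lt hr hodd hf hd hde
end

section
/- Let p be an odd prime and let d, e, f be positive integers with 1 ≤ f < d < e. Then the number of exact (p^d, p^e)-bicyclic pairs of the group M₂(p,d,e,f) equals p^{3d+e−2}(p−1)². -/
open Finset in
/-- For an odd prime `p` and `x ≡ 1` modulo `p`, the `p`-adic valuation of
`1 + x + ⋯ + x ^ (p ^ m - 1)` is `m`. -/
theorem pow_dvd_geom_sum_iff {p x : ℕ} (hp : p.Prime) (hodd : Odd p) (hx : x ≡ 1 [MOD p])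
    (m k : ℕ) : p ^ k ∣ ∑ t ∈ range (p ^ m), x ^ t ↔ k ≤ m := by
  have : Fact p.Prime := ⟨hp⟩
  have hpx : ¬ p ∣ x := fun h => hp.one_lt.ne' <| Nat.dvd_one.1 <|
    (Nat.modEq_zero_iff_dvd.1 (hx.symm.trans (Nat.modEq_zero_iff_dvd.2 h)))
  rcases Nat.lt_trichotomy x 1 with h | rfl | h
  · exact absurd (by simp [Nat.lt_one_iff.1 h]) hpx
  · simp [Nat.pow_dvd_pow_iff_le_right hp.one_lt]
  have hpm : p ^ m ≠ 0 := (pow_pos hp.pos m).ne'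
  have hS : ∑ t ∈ range (p ^ m), x ^ t ≠ 0 := by
    have : x ^ 0 ≤ ∑ t ∈ range (p ^ m), x ^ t :=
      single_le_sum (f := fun t => x ^ t) (fun _ _ => Nat.zero_le _)
        (mem_range.2 (pow_pos hp.pos m))
    simp only [pow_zero] at this
    omega
  have hmul : (∑ t ∈ range (p ^ m), x ^ t) * (x - 1) = x ^ p ^ m - 1 ^ p ^ m := by
    zify [h.le, Nat.one_le_pow (p ^ m) x (by omega), one_pow]
    exact geom_sum_mul _ _
  have hv := padicValNat.pow_sub_pow h ((Nat.modEq_iff_dvd' h.le).1 hx.symm) hpx hpm (hp1 := hodd)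
  rw [← hmul, padicValNat.mul hS (by omega), padicValNat.prime_pow] at hv
  rw [padicValNat_dvd_iff_le hS]
  omega

section Conjugation

variable {G : Type*} [Group G] {a b : G} {u : ℕ}

theorem pow_mul_pow_of_mul_eq (h : a * b = b * a ^ u) (i j : ℕ) :
    a ^ i * b ^ j = b ^ j * a ^ (i * u ^ j) := by
  have h1 (i : ℕ) : a ^ i * b = b * a ^ (i * u) := by
    induction i with
    | zero => simp
    | succ i ih => rw [pow_succ, mul_assoc, h, ← mul_assoc, ih, mul_assoc, ← pow_add, add_one_mul]
  induction j with
  | zero => simp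
  | succ j ih => rw [pow_succ, ← mul_assoc, ih, mul_assoc, h1, ← mul_assoc, pow_succ, mul_assoc i]

theorem pow_mul_pow_mul_pow_mul_pow (h : a * b = b * a ^ u) (i j k l : ℕ) :
    b ^ j * a ^ i * (b ^ l * a ^ k) = b ^ (j + l) * a ^ (i * u ^ l + k) := by
  rw [mul_assoc, ← mul_assoc (a ^ i), pow_mul_pow_of_mul_eq h, mul_assoc (b ^ l), ← pow_add,
    ← mul_assoc, ← pow_add]

theorem pow_mul_pow_pow (h : a * b = b * a ^ u) (i j n : ℕ) :
    (b ^ j * a ^ i) ^ n = b ^ (j * n) * a ^ (i * ∑ t ∈ Finset.range n, (u ^ j) ^ t) := by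
  induction n with
  | zero => simp
  | succ n ih =>
    rw [pow_succ, ih, pow_mul_pow_mul_pow_mul_pow h, geom_sum_succ]
    ring_nf

end Conjugation

/-- If `x` has order `p ^ (m + 1)`, then every nontrivial element of `⟨x⟩` generates a subgroup
containing `x ^ p ^ m`. -/
theorem pow_prime_pow_mem_zpowers {G : Type*} [Group G] {p m : ℕ} (hp : p.Prime) {x g : G}
    (hx : orderOf x = p ^ (m + 1)) (hg : g ∈ Subgroup.zpowers x) (hg1 : g ≠ 1) :
    x ^ p ^ m ∈ Subgroup.zpowers g := by
  obtain ⟨s, rfl⟩ := Subgroup.mem_zpowers_iff.1 hg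
  obtain ⟨n, hn, hs⟩ := (Nat.dvd_prime_pow hp).1 (Int.gcd_dvd_natAbs_right s ((p ^ (m + 1) : ℕ) : ℤ))
  have hnm : n ≤ m := by
    by_contra! hlt
    obtain rfl : n = m + 1 := by omega
    refine hg1 (orderOf_dvd_iff_zpow_eq_one.1 ?_)
    rw [hx, ← hs]
    exact Int.gcd_dvd_left ..
  have hmem : x ^ p ^ n ∈ Subgroup.zpowers (x ^ s) := by
    refine Subgroup.mem_zpowers_iff.2 ⟨Int.gcdA s ((p ^ (m + 1) : ℕ) : ℤ), ?_⟩
    have hb := Int.gcd_eq_gcd_ab s ((p ^ (m + 1) : ℕ) : ℤ)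
    rw [← zpow_natCast x (p ^ n), ← hs, hb, zpow_add, zpow_mul, zpow_mul, zpow_natCast,
      ← hx, pow_orderOf_eq_one, one_zpow, mul_one]
  rw [← Nat.add_sub_cancel' hnm, pow_add, pow_mul]
  exact Subgroup.pow_mem _ hmem _

/-- `a` and `b` exhibit `G` as the semidirect product of `⟨a⟩`, of order `p ^ d`, by `⟨b⟩`, of order
`p ^ e`, where `b` acts by `a ↦ a ^ (1 + p ^ f)`. -/
structure IsSplitMetacyclic {G : Type*} [Group G] (p d e f : ℕ) (a b : G) : Prop where
  orderOf_left : orderOf a = p ^ d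
  orderOf_right : orderOf b = p ^ e
  disjoint : Disjoint (Subgroup.zpowers b) (Subgroup.zpowers a)
  mul_eq : a * b = b * a ^ (1 + p ^ f)
  closure_eq_top : Subgroup.closure {a, b} = ⊤

namespace IsSplitMetacyclic

variable {G : Type*} [Group G] {p d e f : ℕ} {a b : G}

theorem pow_mul_pow_eq_one_iff (h : IsSplitMetacyclic p d e f a b) {i j : ℕ} :
    b ^ j * a ^ i = 1 ↔ p ^ e ∣ j ∧ p ^ d ∣ i := by
  rw [← h.orderOf_left, ← h.orderOf_right, orderOf_dvd_iff_pow_eq_one, orderOf_dvd_iff_pow_eq_one]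
  refine ⟨fun h1 => ?_, fun ⟨h1, h2⟩ => by rw [h1, h2, one_mul]⟩
  have hb : b ^ j = 1 := Subgroup.disjoint_def.1 h.disjoint (Subgroup.npow_mem_zpowers b j) <| by
    rw [eq_inv_of_mul_eq_one_left h1]
    exact inv_mem (Subgroup.npow_mem_zpowers a i)
  exact ⟨hb, by rwa [hb, one_mul] at h1⟩

theorem eq_and_eq_of_pow_mul_pow_eq (h : IsSplitMetacyclic p d e f a b) {i j k l : ℕ} (hi : i < p ^ d)
    (hj : j < p ^ e) (hk : k < p ^ d) (hl : l < p ^ e) (heq : b ^ j * a ^ i = b ^ l * a ^ k) :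
    j = l ∧ i = k := by
  have hb : (b ^ l)⁻¹ * b ^ j = 1 := by
    refine Subgroup.disjoint_def.1 h.disjoint (mul_mem (inv_mem (Subgroup.npow_mem_zpowers b l))
      (Subgroup.npow_mem_zpowers b j)) ?_
    rw [show (b ^ l)⁻¹ * b ^ j = a ^ k * (a ^ i)⁻¹ by
      rw [inv_mul_eq_iff_eq_mul, ← mul_assoc, eq_mul_inv_iff_mul_eq, heq]]
    exact mul_mem (Subgroup.npow_mem_zpowers a k) (inv_mem (Subgroup.npow_mem_zpowers a i))
  have hb' : b ^ j = b ^ l := (inv_mul_eq_one.1 hb).symm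
  rw [hb', mul_right_inj] at heq
  exact ⟨pow_injOn_Iio_orderOf (h.orderOf_right ▸ hj) (h.orderOf_right ▸ hl) hb',
    pow_injOn_Iio_orderOf (h.orderOf_left ▸ hi) (h.orderOf_left ▸ hk) heq⟩

theorem one_add_pow_modEq_one (hf : 0 < f) (j : ℕ) : (1 + p ^ f) ^ j ≡ 1 [MOD p] := by
  have h : 1 + p ^ f ≡ 1 + 0 [MOD p] :=
    Nat.ModEq.add_left 1 (Nat.modEq_zero_iff_dvd.2 (dvd_pow_self p hf.ne'))
  simpa using h.pow j

/-- The `p ^ m`-th powers of `b ^ j * a ^ i`. -/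
theorem exists_pow_prime_pow_eq (h : IsSplitMetacyclic p d e f a b) (hp : p.Prime) (hodd : Odd p)
    (hf : 0 < f) (i j m : ℕ) :
    ∃ s, (b ^ j * a ^ i) ^ p ^ m = b ^ (j * p ^ m) * a ^ (i * s) ∧ ∀ k, p ^ k ∣ s ↔ k ≤ m :=
  ⟨_, pow_mul_pow_pow h.mul_eq i j _,
    pow_dvd_geom_sum_iff hp hodd (one_add_pow_modEq_one hf j) m⟩

theorem exists_pow_mul_pow_eq (h : IsSplitMetacyclic p d e f a b) (hp : p.Prime) (hodd : Odd p)
    (hf : 0 < f) (hde : d ≤ e) (g : G) : ∃ j < p ^ e, ∃ i < p ^ d, b ^ j * a ^ i = g := by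
  suffices hg : ∃ j i : ℕ, b ^ j * a ^ i = g by
    obtain ⟨j, i, rfl⟩ := hg
    refine ⟨j % p ^ e, Nat.mod_lt _ (pow_pos hp.pos e), i % p ^ d, Nat.mod_lt _ (pow_pos hp.pos d),
      ?_⟩
    rw [← h.orderOf_left, ← h.orderOf_right, pow_mod_orderOf, pow_mod_orderOf]
  have hg : g ∈ Subgroup.closure {a, b} := h.closure_eq_top ▸ Subgroup.mem_top g
  induction hg using Subgroup.closure_induction with
  | mem x hx =>
    rcases hx with rfl | rfl
    exacts [⟨0, 1, by simp⟩, ⟨1, 0, by simp⟩]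
  | one => exact ⟨0, 0, by simp⟩
  | mul x y _ _ hx hy =>
    obtain ⟨j, i, rfl⟩ := hx
    obtain ⟨l, k, rfl⟩ := hy
    exact ⟨_, _, (pow_mul_pow_mul_pow_mul_pow h.mul_eq i j k l).symm⟩
  | inv x _ hx =>
    obtain ⟨j, i, rfl⟩ := hx
    obtain ⟨s, hs, hdvd⟩ := h.exists_pow_prime_pow_eq hp hodd hf i j e
    have h1 : (b ^ j * a ^ i) ^ p ^ e = 1 := by
      rw [hs, h.pow_mul_pow_eq_one_iff]
      exact ⟨dvd_mul_left _ _, ((hdvd d).2 hde).mul_left i⟩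
    rw [← Nat.sub_add_cancel (Nat.one_le_pow e p hp.pos), pow_succ] at h1
    rw [← eq_inv_of_mul_eq_one_left h1, pow_mul_pow_pow h.mul_eq]
    exact ⟨_, _, rfl⟩

theorem natCard_eq (h : IsSplitMetacyclic p d e f a b) (hp : p.Prime) (hodd : Odd p)
    (hf : 0 < f) (hde : d ≤ e) : Nat.card G = p ^ e * p ^ d := by
  rw [← h.orderOf_left, ← h.orderOf_right, ← Nat.card_zpowers, ← Nat.card_zpowers]
  refine (Subgroup.isComplement'_of_disjoint_and_mul_eq_univ h.disjoint ?_).card_mul_card.symm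
  refine Set.eq_univ_of_forall fun g => ?_
  obtain ⟨j, -, i, -, rfl⟩ := h.exists_pow_mul_pow_eq hp hodd hf hde g
  exact Set.mul_mem_mul (Subgroup.npow_mem_zpowers b j) (Subgroup.npow_mem_zpowers a i)

theorem orderOf_pow_mul_pow_eq_right_iff (h : IsSplitMetacyclic p d e f a b) (hp : p.Prime)
    (hodd : Odd p) (hf : 0 < f) (hde : d < e) (k l : ℕ) :
    orderOf (b ^ l * a ^ k) = p ^ e ↔ ¬ p ∣ l := by
  have : Fact p.Prime := ⟨hp⟩
  obtain ⟨n, rfl⟩ := Nat.exists_eq_add_of_lt (Nat.zero_lt_of_lt hde)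
  rw [zero_add] at *
  obtain ⟨s, hs, hdvd⟩ := h.exists_pow_prime_pow_eq hp hodd hf k l n
  obtain ⟨s', hs', hdvd'⟩ := h.exists_pow_prime_pow_eq hp hodd hf k l (n + 1)
  have hn : (b ^ l * a ^ k) ^ p ^ n = 1 ↔ p ∣ l := by
    rw [hs, h.pow_mul_pow_eq_one_iff, pow_succ', Nat.mul_dvd_mul_iff_right (pow_pos hp.pos n)]
    exact and_iff_left (((hdvd d).2 (by omega)).mul_left k)
  rw [← hn]
  refine ⟨fun ho h1 => ?_, fun h1 => orderOf_eq_prime_pow h1 ?_⟩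
  · have := orderOf_dvd_of_pow_eq_one h1
    rw [ho, Nat.pow_dvd_pow_iff_le_right hp.one_lt] at this
    omega
  · rw [hs', h.pow_mul_pow_eq_one_iff]
    exact ⟨dvd_mul_left _ _, ((hdvd' d).2 (by omega)).mul_left k⟩

theorem pow_prime_pow_eq (h : IsSplitMetacyclic p d (e + 1) f a b) (hp : p.Prime) (hodd : Odd p)
    (hf : 0 < f) (hde : d ≤ e) (k l : ℕ) : (b ^ l * a ^ k) ^ p ^ e = (b ^ p ^ e) ^ l := by
  obtain ⟨s, hs, hdvd⟩ := h.exists_pow_prime_pow_eq hp hodd hf k l e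
  have ha : a ^ (k * s) = 1 := by
    rw [← orderOf_dvd_iff_pow_eq_one, h.orderOf_left]
    exact ((hdvd d).2 hde).mul_left k
  rw [hs, ha, mul_one, ← pow_mul, mul_comm]

theorem isExactBicyclicPair_iff (h : IsSplitMetacyclic p d e f a b) (hp : p.Prime)
    (hodd : Odd p) (hf : 0 < f) (hd : 0 < d) (hde : d < e) (i j k l : ℕ) :
    IsExactBicyclicPair (p ^ d) (p ^ e) (b ^ j * a ^ i) (b ^ l * a ^ k) ↔
      p ^ (e - d) ∣ j ∧ ¬ p ∣ i ∧ ¬ p ∣ l := by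
  have : Fact p.Prime := ⟨hp⟩
  have hcard := h.natCard_eq hp hodd hf hde.le
  have hfin : Finite G := Nat.finite_of_card_ne_zero <| by
    rw [hcard]; exact (mul_pos (pow_pos hp.pos e) (pow_pos hp.pos d)).ne'
  have hβ := h.orderOf_pow_mul_pow_eq_right_iff hp hodd hf hde k l
  obtain ⟨n, rfl⟩ : ∃ n, d = n + 1 := ⟨d - 1, by omega⟩
  obtain ⟨m, rfl⟩ : ∃ m, e = m + 1 := ⟨e - 1, by omega⟩
  obtain ⟨s, hs, hdvd⟩ := h.exists_pow_prime_pow_eq hp hodd hf i j n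
  obtain ⟨s', hs', hdvd'⟩ := h.exists_pow_prime_pow_eq hp hodd hf i j (n + 1)
  have hβm := h.pow_prime_pow_eq hp hodd hf (by omega : n + 1 ≤ m) k l
  have hαd : (b ^ j * a ^ i) ^ p ^ (n + 1) = 1 ↔ p ^ (m + 1 - (n + 1)) ∣ j := by
    rw [hs', h.pow_mul_pow_eq_one_iff, and_iff_left (((hdvd' _).2 le_rfl).mul_left i),
      ← Nat.mul_dvd_mul_iff_right (pow_pos hp.pos (n + 1)) (a := p ^ (m + 1 - (n + 1))), ← pow_add,
      Nat.sub_add_cancel hde.le]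
  have hsi : p ^ (n + 1) ∣ i * s ↔ p ∣ i := by
    obtain ⟨c, rfl⟩ := (hdvd n).2 le_rfl
    have hc : ¬ p ∣ c := fun hc => by
      have := (hdvd (n + 1)).1 (by rw [pow_succ]; exact mul_dvd_mul_left _ hc)
      omega
    rw [mul_left_comm, pow_succ, Nat.mul_dvd_mul_iff_left (pow_pos hp.pos n), hp.dvd_mul,
      or_iff_left hc]
  constructor
  · rintro ⟨hoα, hoβ, hdisj, -⟩
    have hl := hβ.1 hoβ
    have hj := hαd.1 (hoα ▸ pow_orderOf_eq_one _)
    refine ⟨hj, fun hi => ?_, hl⟩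
    have hα : (b ^ j * a ^ i) ^ p ^ n = b ^ (j * p ^ n) := by
      have ha := hsi.2 hi
      rw [← h.orderOf_left, orderOf_dvd_iff_pow_eq_one] at ha
      rw [hs, ha, mul_one]
    have hmem : (b ^ j * a ^ i) ^ p ^ n ∈ Subgroup.zpowers (b ^ l * a ^ k) := by
      have hbmem : b ^ p ^ m ∈ Subgroup.zpowers (b ^ l * a ^ k) := by
        have hne : (b ^ p ^ m) ^ l ≠ 1 := by
          rw [← pow_mul, ne_eq, ← orderOf_dvd_iff_pow_eq_one, h.orderOf_right, pow_succ,
            Nat.mul_dvd_mul_iff_left (pow_pos hp.pos m)]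
          exact hl
        refine Subgroup.zpowers_le.2 (hβm ▸ Subgroup.npow_mem_zpowers _ _) <|
          pow_prime_pow_mem_zpowers hp h.orderOf_right ?_ hne
        exact Subgroup.pow_mem _ (Subgroup.npow_mem_zpowers b _) l
      obtain ⟨c, rfl⟩ := hj
      rw [hα, show p ^ (m + 1 - (n + 1)) * c * p ^ n = p ^ m * c by
        rw [mul_right_comm, ← pow_add]; congr 2; omega, pow_mul]
      exact Subgroup.pow_mem _ hbmem c
    have h1 := Subgroup.disjoint_def.1 (disjoint_iff.2 hdisj) (Subgroup.npow_mem_zpowers _ _) hmem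
    have := orderOf_dvd_of_pow_eq_one h1
    rw [hoα, Nat.pow_dvd_pow_iff_le_right hp.one_lt] at this
    omega
  · rintro ⟨hj, hi, hl⟩
    have hoβ := hβ.2 hl
    have hoα : orderOf (b ^ j * a ^ i) = p ^ (n + 1) := by
      refine orderOf_eq_prime_pow ?_ (hαd.2 hj)
      rw [hs, h.pow_mul_pow_eq_one_iff, hsi]
      exact fun h1 => hi h1.2
    have hdisj : Disjoint (Subgroup.zpowers (b ^ j * a ^ i)) (Subgroup.zpowers (b ^ l * a ^ k)) := by
      refine Subgroup.disjoint_def.2 fun {g} hgα hgβ => ?_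
      by_contra hg
      have hmem := Subgroup.zpowers_le.2 hgβ (pow_prime_pow_mem_zpowers hp hoα hgα hg)
      have hne : (b ^ j * a ^ i) ^ p ^ n ≠ 1 := fun h1 => by
        rw [hs, h.pow_mul_pow_eq_one_iff, hsi] at h1
        exact hi h1.2
      have hp1 : ((b ^ j * a ^ i) ^ p ^ n) ^ p = 1 := by
        rw [← pow_mul, ← pow_succ, ← hoα, pow_orderOf_eq_one]
      have hb : (b ^ j * a ^ i) ^ p ^ n ∈ Subgroup.zpowers b := by
        obtain ⟨t, ht⟩ := Subgroup.mem_zpowers_iff.1 hmem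
        rw [← ht, ← zpow_natCast, ← zpow_mul, ← orderOf_dvd_iff_zpow_eq_one, hoβ, pow_succ,
          Nat.cast_mul] at hp1
        obtain ⟨c, rfl⟩ := Int.dvd_of_mul_dvd_mul_right (Nat.cast_ne_zero.2 hp.ne_zero) hp1
        rw [← ht, zpow_mul, zpow_natCast, hβm]
        exact Subgroup.zpow_mem _ (Subgroup.pow_mem _ (Subgroup.npow_mem_zpowers b _) l) c
      have ha : a ^ (i * s) ∈ Subgroup.zpowers b := by
        rw [hs] at hb
        exact (Subgroup.mul_mem_cancel_left _ (Subgroup.npow_mem_zpowers b _)).1 hb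
      have ha1 := Subgroup.disjoint_def.1 h.disjoint ha (Subgroup.npow_mem_zpowers a _)
      rw [← orderOf_dvd_iff_pow_eq_one, h.orderOf_left, hsi] at ha1
      exact hi ha1
    refine ⟨hoα, hoβ, disjoint_iff.1 hdisj, fun g => ?_⟩
    have hcompl := Subgroup.isComplement'_of_card_mul_and_disjoint (by
      rw [Nat.card_zpowers, Nat.card_zpowers, hoα, hoβ, hcard, mul_comm]) hdisj
    obtain ⟨⟨⟨x, hx⟩, ⟨y, hy⟩⟩, hxy⟩ := hcompl.surjective g
    obtain ⟨t, rfl⟩ := Subgroup.mem_zpowers_iff.1 hx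
    obtain ⟨t', rfl⟩ := Subgroup.mem_zpowers_iff.1 hy
    exact ⟨t, t', hxy.symm⟩

open Finset in
theorem natCard_isExactBicyclicPair (h : IsSplitMetacyclic p d e f a b) (hp : p.Prime)
    (hodd : Odd p) (hf : 0 < f) (hd : 0 < d) (hde : d < e) :
    Nat.card {x : G × G // IsExactBicyclicPair (p ^ d) (p ^ e) x.1 x.2} =
      p ^ d * (p ^ d).totient * ((p ^ e).totient * p ^ d) := by
  have hcop {n i : ℕ} (hn : 0 < n) : (p ^ n).Coprime i ↔ ¬ p ∣ i := by
    rw [Nat.coprime_pow_left_iff hn, hp.coprime_iff_not_dvd]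
  have hlt {c : ℕ} : p ^ (e - d) * c < p ^ e ↔ c < p ^ d := by
    rw [← Nat.mul_lt_mul_left (pow_pos hp.pos (e - d)) (b := c), ← pow_add,
      Nat.sub_add_cancel hde.le]
  let F : Finset ((ℕ × ℕ) × ℕ × ℕ) :=
    (range (p ^ d) ×ˢ (range (p ^ d)).filter (p ^ d).Coprime) ×ˢ
      ((range (p ^ e)).filter (p ^ e).Coprime ×ˢ range (p ^ d))
  let Φ : (ℕ × ℕ) × ℕ × ℕ → G × G := fun x =>
    (b ^ (p ^ (e - d) * x.1.1) * a ^ x.1.2, b ^ x.2.1 * a ^ x.2.2)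
  have hset : {x : G × G | IsExactBicyclicPair (p ^ d) (p ^ e) x.1 x.2} = Φ '' F := by
    ext ⟨α, β⟩
    constructor
    · intro hx
      obtain ⟨j, hj, i, hi, rfl⟩ := h.exists_pow_mul_pow_eq hp hodd hf hde.le α
      obtain ⟨l, hl, k, hk, rfl⟩ := h.exists_pow_mul_pow_eq hp hodd hf hde.le β
      obtain ⟨⟨c, rfl⟩, hpi, hpl⟩ := (h.isExactBicyclicPair_iff hp hodd hf hd hde i j k l).1 hx
      refine ⟨((c, i), l, k), ?_, rfl⟩
      simp only [F, coe_product, coe_filter, coe_range, Set.mem_prod, Set.mem_ofPred_eq, mem_range,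
        Set.mem_Iio, hcop hd, hcop (hd.trans hde)]
      exact ⟨⟨hlt.1 hj, hi, hpi⟩, ⟨hl, hpl⟩, hk⟩
    · rintro ⟨⟨⟨c, i⟩, l, k⟩, hx, heq⟩
      simp only [F, coe_product, coe_filter, coe_range, Set.mem_prod, Set.mem_ofPred_eq, mem_range,
        Set.mem_Iio, hcop hd, hcop (hd.trans hde)] at hx
      obtain ⟨rfl, rfl⟩ := Prod.mk.inj heq
      exact (h.isExactBicyclicPair_iff hp hodd hf hd hde i _ k l).2
        ⟨dvd_mul_right _ _, hx.1.2.2, hx.2.1.2⟩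
  have hinj : Set.InjOn Φ F := by
    rintro ⟨⟨c, i⟩, l, k⟩ hx ⟨⟨c', i'⟩, l', k'⟩ hx' heq
    simp only [F, coe_product, coe_filter, coe_range, Set.mem_prod, Set.mem_ofPred_eq, mem_range,
      Set.mem_Iio] at hx hx'
    obtain ⟨h1, h2⟩ := Prod.mk.inj heq
    obtain ⟨hc, rfl⟩ := h.eq_and_eq_of_pow_mul_pow_eq hx.1.2.1 (hlt.2 hx.1.1) hx'.1.2.1
      (hlt.2 hx'.1.1) h1
    obtain ⟨rfl, rfl⟩ := h.eq_and_eq_of_pow_mul_pow_eq hx.2.2 hx.2.1.1 hx'.2.2 hx'.2.1.1 h2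
    obtain rfl := Nat.eq_of_mul_eq_mul_left (pow_pos hp.pos _) hc
    rfl
  change Nat.card ({x : G × G | IsExactBicyclicPair (p ^ d) (p ^ e) x.1 x.2} : Set (G × G)) = _
  rw [hset, Nat.card_coe_set_eq, hinj.ncard_image, Set.ncard_coe_finset]
  simp only [F, card_product, card_range, Nat.totient]

end IsSplitMetacyclic

section Presentation

variable {p d e f : ℕ}

theorem M2a_pow : M2a p d e f ^ p ^ d = 1 :=
  PresentedGroup.one_of_mem (rels := M2rels p d e f) (Or.inl rfl)

theorem M2b_pow : M2b p d e f ^ p ^ e = 1 :=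
  PresentedGroup.one_of_mem (rels := M2rels p d e f) (Or.inr (Or.inl rfl))

theorem M2a_mul_M2b : M2a p d e f * M2b p d e f = M2b p d e f * M2a p d e f ^ (1 + p ^ f) := by
  have h : (M2b p d e f)⁻¹ * M2a p d e f * M2b p d e f * (M2a p d e f ^ (1 + p ^ f))⁻¹ = 1 :=
    PresentedGroup.one_of_mem (rels := M2rels p d e f) (Or.inr (Or.inr rfl))
  rw [mul_inv_eq_one, mul_assoc, inv_mul_eq_iff_eq_mul] at h
  exact h

theorem exists_M2_hom {H : Type*} [Group H] {x y : H} (hx : x ^ p ^ d = 1) (hy : y ^ p ^ e = 1)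
    (hxy : y⁻¹ * x * y = x ^ (1 + p ^ f)) :
    ∃ φ : M2 p d e f →* H, φ (M2a p d e f) = x ∧ φ (M2b p d e f) = y := by
  have hrels : ∀ r ∈ M2rels p d e f, FreeGroup.lift ![x, y] r = 1 := by
    rintro r (rfl | rfl | rfl)
    · simpa using hx
    · simpa using hy
    · simpa [mul_inv_eq_one] using hxy
  exact ⟨PresentedGroup.toGroup hrels, PresentedGroup.toGroup.of hrels,
    PresentedGroup.toGroup.of hrels⟩

theorem one_add_prime_pow_pow_eq_one (hp : p.Prime) (hodd : Odd p) (hf : 0 < f) (hde : d ≤ e) :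
    (1 + p ^ f : ZMod (p ^ d)) ^ p ^ e = 1 := by
  have hdvd := (pow_dvd_geom_sum_iff hp hodd
    (pow_one (1 + p ^ f) ▸ IsSplitMetacyclic.one_add_pow_modEq_one hf 1) e d).2 hde
  rw [← ZMod.natCast_eq_zero_iff] at hdvd
  push_cast at hdvd
  rw [← sub_eq_zero, ← geom_sum_mul, hdvd, zero_mul]

/-- The order of `a` is bounded below by letting `a` act on `ZMod (p ^ d)` by `x ↦ x + 1`, and `b⁻¹`
by multiplication by `1 + p ^ f`. -/
theorem orderOf_M2a (hp : p.Prime) (hodd : Odd p) (hf : 0 < f) (hde : d ≤ e) :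
    orderOf (M2a p d e f) = p ^ d := by
  refine Nat.dvd_antisymm (orderOf_dvd_of_pow_eq_one M2a_pow) ?_
  have hpow := one_add_prime_pow_pow_eq_one (p := p) hp hodd hf hde
  obtain ⟨u, hu, hu1⟩ : ∃ u : (ZMod (p ^ d))ˣ, (u : ZMod (p ^ d)) = 1 + p ^ f ∧ u ^ p ^ e = 1 :=
    ⟨_, rfl, Units.pow_ofPowEqOne hpow (pow_pos hp.pos e).ne'⟩
  let x : Equiv.Perm (ZMod (p ^ d)) := Equiv.addRight 1
  let y : Equiv.Perm (ZMod (p ^ d)) := (MulAction.toPermHom _ (ZMod (p ^ d))) u⁻¹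
  have hx (n : ℕ) (z : ZMod (p ^ d)) : (x ^ n) z = z + n := by
    induction n generalizing z with
    | zero => simp
    | succ n ih =>
      rw [pow_succ, Equiv.Perm.mul_apply, ih, Equiv.coe_addRight, Nat.cast_succ, add_assoc,
        add_comm 1]
  have hx1 : x ^ p ^ d = 1 := Equiv.ext fun z => by simp [hx]
  have hy1 : y ^ p ^ e = 1 := by
    rw [← map_pow, inv_pow, hu1, inv_one, map_one]
  have hxy : y⁻¹ * x * y = x ^ (1 + p ^ f) := Equiv.ext fun z => by
    rw [hx]
    push_cast
    rw [← hu]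
    simp [y, x, Units.smul_def]
  obtain ⟨φ, ha, -⟩ := exists_M2_hom hx1 hy1 hxy
  have h1 := map_pow φ (M2a p d e f) (orderOf (M2a p d e f))
  rw [pow_orderOf_eq_one, map_one, ha] at h1
  have h2 := hx (orderOf (M2a p d e f)) 0
  rw [← h1, Equiv.Perm.one_apply, zero_add] at h2
  exact (ZMod.natCast_eq_zero_iff _ _).1 h2.symm

theorem isSplitMetacyclic_M2 (hp : p.Prime) (hodd : Odd p) (hf : 0 < f) (hde : d ≤ e) :
    IsSplitMetacyclic p d e f (M2a p d e f) (M2b p d e f) := by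
  obtain ⟨ψ, ha, hb⟩ := exists_M2_hom (p := p) (d := d) (e := e) (f := f)
    (x := (1 : Multiplicative (ZMod (p ^ e)))) (y := Multiplicative.ofAdd 1) (one_pow _)
    (by rw [← ofAdd_nsmul]; simp) (by simp)
  have hψ (z : ℤ) (hz : ψ (M2b p d e f ^ z) = 1) : M2b p d e f ^ z = 1 := by
    rw [map_zpow, hb, ← ofAdd_zsmul, zsmul_one, ofAdd_eq_one, ZMod.intCast_zmod_eq_zero_iff_dvd] at hz
    obtain ⟨c, rfl⟩ := hz
    rw [zpow_mul, zpow_natCast, M2b_pow, one_zpow]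
  refine ⟨orderOf_M2a hp hodd hf hde, ?_, ?_, M2a_mul_M2b, ?_⟩
  · refine Nat.dvd_antisymm (orderOf_dvd_of_pow_eq_one M2b_pow) ?_
    have := orderOf_map_dvd ψ (M2b p d e f)
    rwa [hb, orderOf_ofAdd_eq_addOrderOf, ZMod.addOrderOf_one] at this
  · refine Subgroup.disjoint_def.2 fun {g} hg hg' => ?_
    obtain ⟨z, rfl⟩ := Subgroup.mem_zpowers_iff.1 hg
    obtain ⟨w, hw⟩ := Subgroup.mem_zpowers_iff.1 hg'
    exact hψ z (by rw [← hw, map_zpow, ha, one_zpow])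
  · rw [← PresentedGroup.closure_range_of (M2rels p d e f)]
    congr 1
    ext g
    simp [Fin.exists_fin_two, M2a, M2b, eq_comm]

end Presentation

/-- For `1 ≤ f < d < e`, the number of exact `(p^d,p^e)`-bicyclic pairs of
`M₂(p,d,e,f)` equals `p^(3d+e-2)(p-1)²`. -/
theorem stmt_9 (p d e f : ℕ) (hp : p.Prime) (hodd : Odd p)
    (hf : 0 < f) (hfd : f < d) (hde : d < e) :
    Nat.card {x : M2 p d e f × M2 p d e f // IsExactBicyclicPair (p ^ d) (p ^ e) x.1 x.2} =
      p ^ (3 * d + e - 2) * (p - 1) ^ 2 := by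
  have h := (isSplitMetacyclic_M2 hp hodd hf hde.le).natCard_isExactBicyclicPair hp hodd hf
    (hf.trans hfd) hde
  rw [h, Nat.totient_prime_pow hp (hf.trans hfd), Nat.totient_prime_pow hp (by omega),
    show 3 * d + e - 2 = d + (d - 1) + (e - 1) + d by omega, pow_add, pow_add, pow_add]
  ring
end

section
/- Let p be an odd prime and let d, e, h, f be positive integers with h − d ≤ f < d < h < e. Then the number of exact (p^d, p^e)-bicyclic pairs of the group M₃(p,d,e,h,f) equals p^{3d+e−2}(p−1)². -/
lemma geom_sum_range_mul (v : ℤ) (m n : ℕ) :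
    ∑ k ∈ Finset.range (m * n), v ^ k =
      (∑ k ∈ Finset.range m, v ^ k) * ∑ k ∈ Finset.range n, (v ^ m) ^ k := by
  induction n with
  | zero => simp
  | succ n ih =>
    rw [Nat.mul_succ, Finset.sum_range_add, ih, Finset.sum_range_succ _ n, mul_add]
    simp only [pow_add, pow_mul, ← Finset.mul_sum]
    rw [mul_comm _ ((v ^ m) ^ n)]

/-- If `v ≡ 1 (mod p ^ f)` with `p` odd and `f > 0`, then
`1 + v + ⋯ + v ^ (p ^ m - 1) ≡ p ^ m (mod p ^ (m + f))`. -/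
lemma pow_dvd_geom_sum_sub {p : ℕ} (hodd : Odd p) {f : ℕ} (hf : 0 < f) (m : ℕ) (v : ℤ)
    (hv : (p : ℤ) ^ f ∣ v - 1) :
    (p : ℤ) ^ (m + f) ∣ ∑ k ∈ Finset.range (p ^ m), v ^ k - (p : ℤ) ^ m := by
  have base (w : ℤ) (hw : (p : ℤ) ^ f ∣ w - 1) :
      (p : ℤ) ^ (f + 1) ∣ ∑ k ∈ Finset.range p, w ^ k - (p : ℤ) := by
    obtain ⟨t, ht⟩ := hw
    obtain ⟨q, hq⟩ := hodd
    have hsq (k : ℕ) : (p : ℤ) ^ (f + 1) ∣ w ^ k - (1 + k * (p ^ f * t)) := by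
      induction k with
      | zero => simp
      | succ k ih =>
        have h2 : (p : ℤ) ^ (f + 1) ∣ (p : ℤ) ^ (f + f) := pow_dvd_pow _ (by omega)
        have hw' : w = 1 + p ^ f * t := by linarith
        have : w ^ (k + 1) - (1 + ((k + 1 : ℕ) : ℤ) * (p ^ f * t)) =
            (w ^ k - (1 + k * (p ^ f * t))) * w + (p : ℤ) ^ (f + f) * (k * t ^ 2) := by
          rw [pow_succ, pow_add]
          push_cast
          nth_rewrite 2 3 [hw']
          rw [hw']
          ring
        rw [this]
        exact dvd_add (ih.mul_right _) (h2.mul_right _)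
    have hsum : (p : ℤ) ^ (f + 1) ∣ ∑ k ∈ Finset.range p, (1 + (k : ℤ) * (p ^ f * t)) - (p : ℤ) := by
      have hg : (∑ k ∈ Finset.range p, (k : ℤ)) * 2 = p * (p - 1) := by
        have := Finset.sum_range_id_mul_two p
        have hp1 : 1 ≤ p := by omega
        zify [hp1] at this
        exact this
      have hg' : ∑ k ∈ Finset.range p, (k : ℤ) = p * q := by
        have : (p : ℤ) = 2 * q + 1 := by exact_mod_cast hq
        have h3 : (p : ℤ) * (p - 1) = p * q * 2 := by rw [this]; ring
        linarith
      rw [Finset.sum_add_distrib, ← Finset.sum_mul, hg']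
      refine ⟨q * t, ?_⟩
      simp
      ring
    have hdiff : (p : ℤ) ^ (f + 1) ∣
        ∑ k ∈ Finset.range p, (w ^ k - (1 + (k : ℤ) * (p ^ f * t))) :=
      Finset.dvd_sum fun k _ => hsq k
    rw [Finset.sum_sub_distrib] at hdiff
    have := dvd_add hdiff hsum
    rwa [sub_add_sub_cancel] at this
  induction m with
  | zero => simp
  | succ m ih =>
    have hfac : ∑ k ∈ Finset.range (p ^ (m + 1)), v ^ k =
        (∑ k ∈ Finset.range (p ^ m), v ^ k) * ∑ k ∈ Finset.range p, (v ^ p ^ m) ^ k := by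
      rw [pow_succ, geom_sum_range_mul]
    obtain ⟨x, hx⟩ := ih
    obtain ⟨y, hy⟩ := base (v ^ p ^ m) (hv.trans (sub_one_dvd_pow_sub_one v _))
    rw [hfac, sub_eq_iff_eq_add.mp hx, sub_eq_iff_eq_add.mp hy]
    refine ⟨x * (p ^ f * y) + x + y, ?_⟩
    ring

/-- If `g ^ p ^ (n + 1) = 1`, every nontrivial power of `g` generates a subgroup containing
`g ^ p ^ n`. -/
lemma pow_mem_zpowers_of_mem_zpowers {G : Type*} [Group G] {p n : ℕ} (hp : p.Prime) {g x : G}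
    (hg : g ^ p ^ (n + 1) = 1) (hx : x ∈ Subgroup.zpowers g) (hx1 : x ≠ 1) :
    g ^ p ^ n ∈ Subgroup.zpowers x := by
  obtain ⟨k, rfl⟩ := Subgroup.mem_zpowers_iff.mp hx
  have hgz : g ^ ((p : ℤ) ^ (n + 1)) = 1 := by exact_mod_cast hg
  have hgcd : Int.gcd k (p ^ (n + 1)) ∣ p ^ (n + 1) := by
    exact_mod_cast Int.gcd_dvd_right k ((p : ℤ) ^ (n + 1))
  obtain ⟨r, hr, hr'⟩ := (Nat.dvd_prime_pow hp).mp hgcd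
  have hrn : r ≤ n := by
    by_contra hcon
    obtain rfl : r = n + 1 := by omega
    have h1 : (p : ℤ) ^ (n + 1) ∣ k := by
      have := Int.gcd_dvd_left k ((p : ℤ) ^ (n + 1))
      rw [hr'] at this
      exact_mod_cast this
    obtain ⟨q, rfl⟩ := h1
    exact hx1 (by rw [zpow_mul, hgz, one_zpow])
  have hb := Int.gcd_eq_gcd_ab k ((p : ℤ) ^ (n + 1))
  rw [hr'] at hb
  set u := Int.gcdA k ((p : ℤ) ^ (n + 1))
  set w := Int.gcdB k ((p : ℤ) ^ (n + 1))
  refine Subgroup.mem_zpowers_iff.mpr ⟨u * p ^ (n - r), ?_⟩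
  have h2 : ((p ^ n : ℕ) : ℤ) = k * (u * p ^ (n - r)) + p ^ (n + 1) * (w * p ^ (n - r)) := by
    obtain ⟨t, rfl⟩ := Nat.exists_eq_add_of_le hrn
    rw [Nat.add_sub_cancel_left, ← mul_assoc, ← mul_assoc, ← add_mul, ← hb]
    push_cast
    ring
  rw [← zpow_natCast g, h2, zpow_add, zpow_mul _ _ (w * _), hgz, one_zpow, mul_one, zpow_mul g k]

lemma card_subtype_of_coprime_param {G : Type*} (P : G → Prop) (n m : ℕ) (F : ℕ → ℕ → G)
    (hP : ∀ x, P x ↔ ∃ s < n, ∃ t < m, n.Coprime s ∧ F s t = x)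
    (hinj : ∀ s < n, ∀ t < m, ∀ s' < n, ∀ t' < m, F s t = F s' t' → s = s' ∧ t = t') :
    Nat.card {x // P x} = n.totient * m := by
  classical
  have himg : Nat.card {x // P x} = Nat.card
      ((((Finset.range n).filter n.Coprime) ×ˢ Finset.range m).image fun y => F y.1 y.2) := by
    refine Nat.card_congr (Equiv.subtypeEquivRight fun x => ?_)
    rw [hP]
    simp only [Finset.mem_image, Finset.mem_product, Finset.mem_filter, Finset.mem_range,
      Prod.exists]
    constructor
    · rintro ⟨s, hs, t, ht, hc, h⟩
      exact ⟨s, t, ⟨⟨hs, hc⟩, ht⟩, h⟩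
    · rintro ⟨s, t, ⟨⟨hs, hc⟩, ht⟩, h⟩
      exact ⟨s, hs, t, ht, hc, h⟩
  rw [himg, Nat.card_eq_fintype_card, Fintype.card_coe, Finset.card_image_of_injOn,
    Finset.card_product, Finset.card_range, Nat.totient_eq_card_coprime]
  rintro ⟨s, t⟩ h ⟨s', t'⟩ h' heq
  simp only [Finset.coe_product, Set.mem_prod, Finset.mem_coe, Finset.mem_filter,
    Finset.mem_range] at h h'
  obtain ⟨h1, h2⟩ := hinj s h.1.1 t h.2 s' h'.1.1 t' h'.2 heq
  rw [h1, h2]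

lemma zpow_mul_pow_of_mul_eq {G : Type*} [Group G] {p f : ℕ} {a b : G}
    (h : a * b = b * a ^ (1 + p ^ f)) (j : ℤ) (i : ℕ) :
    a ^ j * b ^ i = b ^ i * a ^ (j * (1 + (p : ℤ) ^ f) ^ i) := by
  have h1 (j : ℤ) : a ^ j * b = b * a ^ (j * (1 + (p : ℤ) ^ f)) := by
    have : SemiconjBy b (a ^ (1 + (p : ℤ) ^ f)) a := by
      have := h.symm
      rw [← zpow_natCast] at this
      push_cast at this
      exact this
    rw [mul_comm j, zpow_mul]
    exact (this.zpow_right j).symm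
  induction i with
  | zero => simp
  | succ i ih => rw [pow_succ, ← mul_assoc, ih, mul_assoc, h1, pow_succ]; simp only [mul_assoc]

/-- The properties of the generators of `M₃(p, c + 1, c + 1 + l + k, c + 1 + l, f)` from which its
bicyclic pairs are determined. -/
structure IsM3Generators {G : Type*} [Group G] (p c k l f : ℕ) (a b : G) : Prop where
  orderOf_left : orderOf a = p ^ (c + 1 + l)
  pow_right : b ^ p ^ (c + 1 + k) = a ^ p ^ (c + 1)
  mul_comm_rel : a * b = b * a ^ (1 + p ^ f)
  dvd_of_pow_mem : ∀ i : ℤ, b ^ i ∈ Subgroup.zpowers a → (p : ℤ) ^ (c + 1 + k) ∣ i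
  exists_eq : ∀ g : G, ∃ i j : ℤ, g = b ^ i * a ^ j

namespace IsM3Generators

variable {G : Type*} [Group G] {p c k l f : ℕ} {a b : G}

lemma zpow_left_eq_one_iff (H : IsM3Generators p c k l f a b) (j : ℤ) :
    a ^ j = 1 ↔ (p : ℤ) ^ (c + 1 + l) ∣ j := by
  rw [← orderOf_dvd_iff_zpow_eq_one, H.orderOf_left]
  push_cast
  rfl

lemma zpow_right (H : IsM3Generators p c k l f a b) (s : ℤ) :
    b ^ ((p : ℤ) ^ (c + 1 + k) * s) = a ^ ((p : ℤ) ^ (c + 1) * s) := by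
  rw [zpow_mul, zpow_mul]
  congr 1
  exact_mod_cast H.pow_right

lemma exists_eq_nat (H : IsM3Generators p c k l f a b) (hp : p.Prime) (g : G) :
    ∃ i < p ^ (c + 1 + k), ∃ j : ℤ, g = b ^ i * a ^ j := by
  obtain ⟨i, j, rfl⟩ := H.exists_eq g
  have hN : (0 : ℤ) < (p : ℤ) ^ (c + 1 + k) := pow_pos (by exact_mod_cast hp.pos) _
  obtain ⟨r, hr⟩ := Int.eq_ofNat_of_zero_le (Int.emod_nonneg i hN.ne')
  refine ⟨r, ?_, p ^ (c + 1) * (i / p ^ (c + 1 + k)) + j, ?_⟩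
  · have := Int.emod_lt_of_pos i hN
    rw [hr] at this
    exact_mod_cast this
  · rw [zpow_add, ← H.zpow_right, ← mul_assoc, ← zpow_natCast, ← zpow_add, ← hr,
      Int.emod_add_mul_ediv]

lemma mul_pow (H : IsM3Generators p c k l f a b) (i : ℕ) (j : ℤ) (n : ℕ) :
    (b ^ i * a ^ j) ^ n =
      b ^ (i * n) * a ^ (j * ∑ x ∈ Finset.range n, ((1 + (p : ℤ) ^ f) ^ i) ^ x) := by
  induction n with
  | zero => simp
  | succ n ih =>
    rw [pow_succ, ih, geom_sum_succ, Nat.mul_succ, pow_add, mul_assoc, ← mul_assoc _ (b ^ i),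
      zpow_mul_pow_of_mul_eq H.mul_comm_rel]
    simp only [mul_assoc, ← zpow_add]
    congr 3
    ring

lemma eq_iff (H : IsM3Generators p c k l f a b) (i i' j j' : ℤ) :
    b ^ i * a ^ j = b ^ i' * a ^ j' ↔
      ∃ s, i - i' = p ^ (c + 1 + k) * s ∧ (p : ℤ) ^ (c + 1 + l) ∣ p ^ (c + 1) * s + j - j' := by
  have key : b ^ i * a ^ j = b ^ i' * a ^ j' ↔ b ^ (i - i') * a ^ (j - j') = 1 := by
    rw [sub_eq_neg_add i, zpow_add, zpow_sub a, zpow_neg, mul_assoc, ← mul_assoc _ (a ^ j),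
      ← mul_assoc, mul_inv_eq_one, inv_mul_eq_iff_eq_mul]
  rw [key]
  constructor
  · intro h
    have hmem : b ^ (i - i') ∈ Subgroup.zpowers a := by
      rw [eq_inv_of_mul_eq_one_left h]
      exact inv_mem (Subgroup.zpow_mem_zpowers a _)
    obtain ⟨s, hs⟩ := H.dvd_of_pow_mem _ hmem
    refine ⟨s, hs, ?_⟩
    rw [hs, H.zpow_right, ← zpow_add, H.zpow_left_eq_one_iff] at h
    rwa [add_sub_assoc]
  · rintro ⟨s, hs, h⟩
    rw [hs, H.zpow_right, ← zpow_add, H.zpow_left_eq_one_iff, ← add_sub_assoc]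
    exact h

lemma geom_sum_dvd (hodd : Odd p) (hf : 0 < f) (i m : ℕ) : (p : ℤ) ^ (m + f) ∣
    ∑ x ∈ Finset.range (p ^ m), ((1 + (p : ℤ) ^ f) ^ i) ^ x - (p : ℤ) ^ m := by
  refine pow_dvd_geom_sum_sub hodd hf m _ (dvd_trans ?_ (sub_one_dvd_pow_sub_one _ _))
  simp

/-- Elements `b ^ i * a ^ j` with `p ∤ i`; they are the possible second entries of a pair. -/
def IsLong (p : ℕ) (a b β : G) : Prop := ∃ (i : ℕ) (j : ℤ), ¬ p ∣ i ∧ β = b ^ i * a ^ j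

/-- The possible first entries of a pair. -/
def IsShort (p c : ℕ) (a α : G) : Prop := α ^ p ^ (c + 1) = 1 ∧ α ^ p ^ c ∉ Subgroup.zpowers a

lemma long_pow (H : IsM3Generators p c k l f a b) (hodd : Odd p) (hf : 0 < f) (hk : 0 < k)
    (hl : 0 < l) (i : ℕ) (j : ℤ) :
    (b ^ i * a ^ j) ^ p ^ (c + l + k) = a ^ ((p : ℤ) ^ (c + l) * i) := by
  obtain ⟨r, rfl⟩ : ∃ r, l = r + 1 := ⟨l - 1, by omega⟩
  have hdvd : (p : ℤ) ^ (c + 1 + (r + 1)) ∣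
      j * ∑ x ∈ Finset.range (p ^ (c + (r + 1) + k)), ((1 + (p : ℤ) ^ f) ^ i) ^ x := by
    refine Dvd.dvd.mul_left ?_ _
    have h := (pow_dvd_pow (p : ℤ) (Nat.le_add_right (c + (r + 1) + k) f)).trans
      (geom_sum_dvd hodd hf i (c + (r + 1) + k))
    exact (pow_dvd_pow _ (by omega)).trans ((dvd_sub_self_right).mp h)
  rw [H.mul_pow, (H.zpow_left_eq_one_iff _).mpr hdvd, mul_one, ← zpow_natCast]
  have := H.zpow_right (p ^ r * i)
  have e1 : (((i * p ^ (c + (r + 1) + k)) : ℕ) : ℤ) = p ^ (c + 1 + k) * (p ^ r * i) := by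
    push_cast; ring
  rw [e1, this]
  congr 1
  ring

lemma coprime_pow_succ_iff (hp : p.Prime) (n s : ℕ) : (p ^ (n + 1)).Coprime s ↔ ¬ p ∣ s := by
  rw [Nat.coprime_pow_left_iff n.succ_pos, hp.coprime_iff_not_dvd]

lemma zpow_left_eq_iff (H : IsM3Generators p c k l f a b) (i j : ℤ) :
    a ^ i = a ^ j ↔ (p : ℤ) ^ (c + 1 + l) ∣ i - j := by
  rw [← H.zpow_left_eq_one_iff, zpow_sub, mul_inv_eq_one]

lemma isLong_iff (H : IsM3Generators p c k l f a b) (i : ℕ) (j : ℤ) :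
    IsLong p a b (b ^ i * a ^ j) ↔ ¬ p ∣ i := by
  refine ⟨?_, fun h => ⟨i, j, h, rfl⟩⟩
  rintro ⟨i', j', hi', h⟩ hi
  rw [← zpow_natCast, ← zpow_natCast, H.eq_iff] at h
  obtain ⟨s, hs, -⟩ := h
  refine hi' ?_
  zify at hi ⊢
  have : (i' : ℤ) = i - p ^ (c + 1 + k) * s := by linarith
  rw [this]
  exact dvd_sub hi ((dvd_pow_self _ (by omega)).mul_right _)

lemma pow_dvd_of_isShort (H : IsM3Generators p c k l f a b) (hp : p.Prime) (i : ℕ) (j : ℤ)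
    (h : IsShort p c a (b ^ i * a ^ j)) : p ^ k ∣ i := by
  have h1 := h.1
  rw [H.mul_pow] at h1
  have hmem : b ^ (((i * p ^ (c + 1) : ℕ)) : ℤ) ∈ Subgroup.zpowers a := by
    rw [zpow_natCast, eq_inv_of_mul_eq_one_left h1]
    exact inv_mem (Subgroup.zpow_mem_zpowers a _)
  have h2 : p ^ (c + 1 + k) ∣ i * p ^ (c + 1) := by exact_mod_cast H.dvd_of_pow_mem _ hmem
  rw [pow_add, mul_comm] at h2
  exact Nat.dvd_of_mul_dvd_mul_right (pow_pos hp.pos _) h2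

lemma isShort_iff (H : IsM3Generators p c k l f a b) (hp : p.Prime) (hodd : Odd p) (hf : 0 < f)
    (hlf : l ≤ f) (s : ℕ) (j : ℤ) :
    IsShort p c a (b ^ (p ^ k * s) * a ^ j) ↔ (p : ℤ) ^ l ∣ s + j ∧ ¬ p ∣ s := by
  have hp0 : (p : ℤ) ≠ 0 := by exact_mod_cast hp.ne_zero
  unfold IsShort
  refine and_congr ?_ (not_congr ?_)
  · rw [H.mul_pow]
    obtain ⟨y, hy⟩ := geom_sum_dvd hodd hf (p ^ k * s) (c + 1)
    obtain ⟨g, rfl⟩ := Nat.exists_eq_add_of_le hlf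
    have e1 : (((p ^ k * s * p ^ (c + 1)) : ℕ) : ℤ) = p ^ (c + 1 + k) * s := by
      push_cast; ring
    rw [sub_eq_iff_eq_add.mp hy, ← zpow_natCast, e1, H.zpow_right, ← zpow_add,
      H.zpow_left_eq_one_iff]
    have e2 : (p : ℤ) ^ (c + 1) * s + j * (p ^ (c + 1 + (l + g)) * y + p ^ (c + 1)) =
        p ^ (c + 1) * (s + j + p ^ l * (p ^ g * y * j)) := by ring
    rw [e2, pow_add, mul_dvd_mul_iff_left (pow_ne_zero _ hp0)]
    exact dvd_add_left (Dvd.intro _ rfl)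
  · rw [H.mul_pow, Subgroup.mul_mem_cancel_right _ (Subgroup.zpow_mem_zpowers a _)]
    have e1 : p ^ k * s * p ^ c = p ^ (c + k) * s := by ring
    rw [e1]
    constructor
    · intro h
      have h2 : p ^ (c + 1 + k) ∣ p ^ (c + k) * s := by
        rw [← zpow_natCast] at h
        exact_mod_cast H.dvd_of_pow_mem _ h
      rw [show c + 1 + k = c + k + 1 by omega, pow_succ] at h2
      exact Nat.dvd_of_mul_dvd_mul_left (pow_pos hp.pos _) h2
    · rintro ⟨t, rfl⟩
      have := H.zpow_right t
      have e2 : (p : ℤ) ^ (c + 1 + k) * t = ((p ^ (c + k) * (p * t) : ℕ) : ℤ) := by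
        push_cast; ring
      rw [e2, zpow_natCast] at this
      rw [this]
      exact Subgroup.zpow_mem_zpowers a _

lemma card_isLong (H : IsM3Generators p c k l f a b) (hp : p.Prime) :
    Nat.card {x : G // IsLong p a b x} = (p ^ (c + k + 1)).totient * p ^ (c + 1 + l) := by
  have hN : c + 1 + k = c + k + 1 := by omega
  have hM : (0 : ℤ) < (p : ℤ) ^ (c + 1 + l) := pow_pos (by exact_mod_cast hp.pos) _
  refine card_subtype_of_coprime_param _ _ _ (fun s t => b ^ s * a ^ t) (fun x => ?_) ?_
  · simp only [coprime_pow_succ_iff hp]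
    constructor
    · intro hx
      obtain ⟨i, hi, j, rfl⟩ := H.exists_eq_nat hp x
      obtain ⟨t, ht⟩ := Int.eq_ofNat_of_zero_le (Int.emod_nonneg j hM.ne')
      refine ⟨i, hN ▸ hi, t, ?_, (H.isLong_iff i j).mp hx, ?_⟩
      · have := Int.emod_lt_of_pos j hM
        rw [ht] at this
        exact_mod_cast this
      · congr 1
        rw [← zpow_natCast a, ← ht, H.zpow_left_eq_iff]
        exact Int.dvd_of_emod_eq_zero (by simp)
    · rintro ⟨s, -, t, -, h, rfl⟩
      exact ⟨s, t, h, by simp⟩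
  · intro s hs t ht s' hs' t' ht' h
    simp only [← zpow_natCast] at h
    obtain ⟨q, hq, hd⟩ := (H.eq_iff _ _ _ _).mp h
    have hss : s = s' := by
      refine Nat.ModEq.eq_of_lt_of_lt ?_ hs hs'
      rw [Nat.ModEq.comm, Nat.modEq_iff_dvd]
      exact ⟨q, by rw [hq, hN]; push_cast; rfl⟩
    subst hss
    refine ⟨rfl, ?_⟩
    have hq0 : q = 0 := by
      rw [sub_self, eq_comm, mul_eq_zero] at hq
      exact hq.resolve_left (pow_ne_zero _ (by exact_mod_cast hp.ne_zero))
    refine Nat.ModEq.eq_of_lt_of_lt ?_ ht ht'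
    rw [Nat.ModEq.comm, Nat.modEq_iff_dvd]
    rw [hq0, mul_zero, zero_add] at hd
    exact_mod_cast hd

lemma card_isShort (H : IsM3Generators p c k l f a b) (hp : p.Prime) (hodd : Odd p) (hf : 0 < f)
    (hlf : l ≤ f) :
    Nat.card {x : G // IsShort p c a x} = (p ^ (c + 1)).totient * p ^ (c + 1) := by
  have hp0 : (p : ℤ) ≠ 0 := by exact_mod_cast hp.ne_zero
  have hM : (0 : ℤ) < (p : ℤ) ^ (c + 1) := pow_pos (by exact_mod_cast hp.pos) _
  refine card_subtype_of_coprime_param _ _ _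
    (fun s t => b ^ (p ^ k * s) * a ^ (-(s : ℤ) + p ^ l * t)) (fun x => ?_) ?_
  · simp only [coprime_pow_succ_iff hp]
    constructor
    · intro hx
      obtain ⟨i, hi, j, rfl⟩ := H.exists_eq_nat hp x
      obtain ⟨s, rfl⟩ := H.pow_dvd_of_isShort hp i j hx
      obtain ⟨⟨r, hr⟩, hs⟩ := (H.isShort_iff hp hodd hf hlf s j).mp hx
      obtain ⟨t, ht⟩ := Int.eq_ofNat_of_zero_le (Int.emod_nonneg r hM.ne')
      refine ⟨s, ?_, t, ?_, hs, ?_⟩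
      · rw [pow_add _ _ k, mul_comm] at hi
        exact Nat.lt_of_mul_lt_mul_right hi
      · have := Int.emod_lt_of_pos r hM
        rw [ht] at this
        exact_mod_cast this
      · congr 1
        rw [H.zpow_left_eq_iff]
        refine ⟨-(r / p ^ (c + 1)), ?_⟩
        have h1 := Int.emod_add_mul_ediv r (p ^ (c + 1))
        rw [ht] at h1
        have h2 : j = p ^ l * r - s := by linarith
        rw [h2]
        nth_rewrite 1 [← h1]
        ring
    · rintro ⟨s, -, t, -, h, rfl⟩
      exact (H.isShort_iff hp hodd hf hlf _ _).mpr ⟨⟨t, by ring⟩, h⟩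
  · intro s hs t ht s' hs' t' ht' h
    simp only [← zpow_natCast] at h
    obtain ⟨q, hq, hd⟩ := (H.eq_iff _ _ _ _).mp h
    have hss : (s : ℤ) - s' = p ^ (c + 1) * q := by
      push_cast at hq
      refine mul_left_cancel₀ (pow_ne_zero k hp0) ?_
      rw [mul_sub, hq]
      ring
    have hss' : s = s' := by
      refine Nat.ModEq.eq_of_lt_of_lt ?_ hs hs'
      rw [Nat.ModEq.comm, Nat.modEq_iff_dvd]
      exact ⟨q, by rw [hss]; push_cast; rfl⟩
    subst hss'
    refine ⟨rfl, ?_⟩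
    have hq0 : q = 0 := by
      rw [sub_self, eq_comm, mul_eq_zero] at hss
      exact hss.resolve_left hM.ne'
    refine Nat.ModEq.eq_of_lt_of_lt ?_ ht ht'
    rw [Nat.ModEq.comm, Nat.modEq_iff_dvd]
    have e : (p : ℤ) ^ (c + 1) * q + (-(s : ℤ) + p ^ l * t) - (-(s : ℤ) + p ^ l * t') =
        p ^ l * (t - t') := by rw [hq0]; ring
    rw [e, pow_add, mul_comm, mul_dvd_mul_iff_left (pow_ne_zero _ hp0)] at hd
    exact_mod_cast hd

lemma card_eq (H : IsM3Generators p c k l f a b) (hp : p.Prime) :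
    Nat.card G = p ^ (c + 1) * p ^ (c + 1 + l + k) := by
  have hM : (0 : ℤ) < (p : ℤ) ^ (c + 1 + l) := pow_pos (by exact_mod_cast hp.pos) _
  have hbij : Function.Bijective
      fun x : Fin (p ^ (c + 1 + k)) × Fin (p ^ (c + 1 + l)) => b ^ (x.1 : ℕ) * a ^ (x.2 : ℕ) := by
    constructor
    · rintro ⟨⟨s, hs⟩, ⟨t, ht⟩⟩ ⟨⟨s', hs'⟩, ⟨t', ht'⟩⟩ h
      simp only [← zpow_natCast] at h
      obtain ⟨q, hq, hd⟩ := (H.eq_iff _ _ _ _).mp h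
      have hss : s = s' := by
        refine Nat.ModEq.eq_of_lt_of_lt ?_ hs hs'
        rw [Nat.ModEq.comm, Nat.modEq_iff_dvd]
        exact ⟨q, by rw [hq]; push_cast; rfl⟩
      subst hss
      have hq0 : q = 0 := by
        rw [sub_self, eq_comm, mul_eq_zero] at hq
        exact hq.resolve_left (pow_ne_zero _ (by exact_mod_cast hp.ne_zero))
      have htt : t = t' := by
        refine Nat.ModEq.eq_of_lt_of_lt ?_ ht ht'
        rw [Nat.ModEq.comm, Nat.modEq_iff_dvd]
        rw [hq0, mul_zero, zero_add] at hd
        exact_mod_cast hd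
      subst htt
      rfl
    · intro g
      obtain ⟨i, hi, j, rfl⟩ := H.exists_eq_nat hp g
      obtain ⟨t, ht⟩ := Int.eq_ofNat_of_zero_le (Int.emod_nonneg j hM.ne')
      have ht' : t < p ^ (c + 1 + l) := by
        have := Int.emod_lt_of_pos j hM
        rw [ht] at this
        exact_mod_cast this
      refine ⟨⟨⟨i, hi⟩, ⟨t, ht'⟩⟩, ?_⟩
      change b ^ i * a ^ t = _
      congr 1
      rw [← zpow_natCast a, ← ht, H.zpow_left_eq_iff]
      exact Int.dvd_of_emod_eq_zero (by simp)
  rw [← Nat.card_congr (Equiv.ofBijective _ hbij)]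
  rw [Nat.card_prod, Nat.card_fin, Nat.card_fin]
  ring

lemma isExactBicyclicPair_iff (H : IsM3Generators p c k l f a b) (hp : p.Prime) (hodd : Odd p)
    (hf : 0 < f) (hk : 0 < k) (hl : 0 < l) (α β : G) :
    IsExactBicyclicPair (p ^ (c + 1)) (p ^ (c + 1 + l + k)) α β ↔
      IsShort p c a α ∧ IsLong p a b β := by
  have : Fact p.Prime := ⟨hp⟩
  obtain ⟨i, -, j, rfl⟩ := H.exists_eq_nat hp β
  have hβ := H.long_pow hodd hf hk hl i j
  have hexp : c + 1 + l + k = c + l + k + 1 := by omega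
  have hexp' : c + 1 + l = c + l + 1 := by omega
  have hp0 : (p : ℤ) ≠ 0 := by exact_mod_cast hp.ne_zero
  have hβ1 : (b ^ i * a ^ j) ^ p ^ (c + l + k) = 1 ↔ p ∣ i := by
    rw [hβ, H.zpow_left_eq_one_iff, hexp', pow_succ,
      mul_dvd_mul_iff_left (pow_ne_zero _ hp0)]
    exact_mod_cast Iff.rfl
  rw [H.isLong_iff, hexp]
  set β := b ^ i * a ^ j with hβdef
  constructor
  · rintro ⟨hα, hβo, hinf, -⟩
    have hpi : ¬ p ∣ i := by
      rw [← hβ1, ← orderOf_dvd_iff_pow_eq_one, hβo, Nat.pow_dvd_pow_iff_le_right hp.one_lt]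
      omega
    refine ⟨⟨hα ▸ pow_orderOf_eq_one α, ?_⟩, hpi⟩
    intro hmem
    obtain ⟨m, hm⟩ := Subgroup.mem_zpowers_iff.mp hmem
    have hm1 : (p : ℤ) ^ (c + l) ∣ m := by
      have h1 : a ^ (m * p) = 1 := by
        rw [zpow_mul, hm, zpow_natCast, ← pow_mul, ← pow_succ, ← hα, pow_orderOf_eq_one]
      rw [H.zpow_left_eq_one_iff, hexp', pow_succ, mul_dvd_mul_iff_right hp0] at h1
      exact h1
    obtain ⟨n, rfl⟩ := hm1
    have hcop : IsCoprime (i : ℤ) p :=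
      (Nat.isCoprime_iff_coprime.mpr ((hp.coprime_iff_not_dvd).mpr hpi)).symm
    obtain ⟨u, v, huv⟩ := hcop
    have hin : α ^ p ^ c ∈ Subgroup.zpowers β := by
      have : α ^ p ^ c = (β ^ p ^ (c + l + k)) ^ (u * n) := by
        rw [hβ, ← hm, ← zpow_mul, H.zpow_left_eq_iff]
        refine ⟨v * n, ?_⟩
        have : n = n * (u * i + v * p) := by rw [huv, mul_one]
        nth_rewrite 1 [this]
        rw [hexp']
        ring
      rw [this]
      exact Subgroup.zpow_mem _ (Subgroup.npow_mem_zpowers _ _) _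
    have hbot : α ^ p ^ c ∈ Subgroup.zpowers α ⊓ Subgroup.zpowers β :=
      ⟨Subgroup.npow_mem_zpowers _ _, hin⟩
    rw [hinf, Subgroup.mem_bot, ← orderOf_dvd_iff_pow_eq_one, hα,
      Nat.pow_dvd_pow_iff_le_right hp.one_lt] at hbot
    omega
  · rintro ⟨⟨hα, hmem⟩, hpi⟩
    have hαo : orderOf α = p ^ (c + 1) :=
      orderOf_eq_prime_pow (fun h => hmem (h ▸ one_mem _)) hα
    have hβp : β ^ p ^ (c + l + k + 1) = 1 := by
      rw [pow_succ, pow_mul, hβ, ← zpow_natCast, ← zpow_mul, H.zpow_left_eq_one_iff]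
      exact ⟨i, by rw [hexp']; ring⟩
    have hβo : orderOf β = p ^ (c + l + k + 1) :=
      orderOf_eq_prime_pow (fun h => hpi (hβ1.mp h)) hβp
    have hinf : Subgroup.zpowers α ⊓ Subgroup.zpowers β = ⊥ := by
      rw [Subgroup.eq_bot_iff_forall]
      rintro x ⟨hxα, hxβ⟩
      by_contra hx1
      have h1 := pow_mem_zpowers_of_mem_zpowers hp hα hxα hx1
      have h2 : α ^ p ^ c ∈ Subgroup.zpowers β := (Subgroup.zpowers_le.mpr hxβ) h1
      obtain ⟨m, hm⟩ := Subgroup.mem_zpowers_iff.mp h2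
      have hm1 : β ^ (m * p) = 1 := by
        rw [zpow_mul, hm, zpow_natCast, ← pow_mul, ← pow_succ, hα]
      rw [← orderOf_dvd_iff_zpow_eq_one, hβo, pow_succ] at hm1
      push_cast at hm1
      rw [mul_dvd_mul_iff_right hp0] at hm1
      obtain ⟨n, rfl⟩ := hm1
      apply hmem
      have e : β ^ ((p : ℤ) ^ (c + l + k)) = β ^ p ^ (c + l + k) := by
        exact_mod_cast zpow_natCast β (p ^ (c + l + k))
      rw [← hm, zpow_mul, e, hβ]
      exact Subgroup.zpow_mem _ (Subgroup.zpow_mem_zpowers a _) _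
    refine ⟨hαo, hβo, hinf, fun g => ?_⟩
    have hcard := H.card_eq hp
    have : Finite G := Nat.finite_of_card_ne_zero (by
      rw [hcard]; exact mul_ne_zero (pow_ne_zero _ hp.ne_zero) (pow_ne_zero _ hp.ne_zero))
    have hc := Subgroup.isComplement'_of_card_mul_and_disjoint
      (H := Subgroup.zpowers α) (K := Subgroup.zpowers β)
      (by rw [Nat.card_zpowers, Nat.card_zpowers, hαo, hβo, hcard, hexp]) (disjoint_iff.mpr hinf)
    obtain ⟨⟨⟨x, hx⟩, ⟨y, hy⟩⟩, hxy⟩ := hc.2 g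
    obtain ⟨m, rfl⟩ := Subgroup.mem_zpowers_iff.mp hx
    obtain ⟨n, rfl⟩ := Subgroup.mem_zpowers_iff.mp hy
    exact ⟨m, n, hxy.symm⟩

lemma card_isExactBicyclicPair (H : IsM3Generators p c k l f a b) (hp : p.Prime) (hodd : Odd p)
    (hf : 0 < f) (hk : 0 < k) (hl : 0 < l) (hlf : l ≤ f) :
    Nat.card {x : G × G // IsExactBicyclicPair (p ^ (c + 1)) (p ^ (c + 1 + l + k)) x.1 x.2} =
      p ^ (3 * (c + 1) + (c + 1 + l + k) - 2) * (p - 1) ^ 2 := by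
  rw [Nat.card_congr (Equiv.subtypeEquivRight fun x : G × G =>
      H.isExactBicyclicPair_iff hp hodd hf hk hl x.1 x.2),
    Nat.card_congr (Equiv.subtypeProdEquivProd (p := IsShort p c a) (q := IsLong p a b)),
    Nat.card_prod, H.card_isShort hp hodd hf hlf, H.card_isLong hp,
    Nat.totient_prime_pow_succ hp, Nat.totient_prime_pow_succ hp,
    show 3 * (c + 1) + (c + 1 + l + k) - 2 = c + (c + 1) + (c + k) + (c + 1 + l) by omega]
  ring

end IsM3Generators

section Presentation

variable {p d e h f : ℕ}

lemma M3a_pow : M3a p d e h f ^ p ^ h = 1 := by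
  exact PresentedGroup.one_of_mem (rels := M3rels p d e h f)
    (x := FreeGroup.of 0 ^ p ^ h) (by simp [M3rels])

lemma M3b_pow : M3b p d e h f ^ p ^ (d + e - h) = M3a p d e h f ^ p ^ d := by
  rw [← mul_inv_eq_one]
  exact PresentedGroup.one_of_mem (rels := M3rels p d e h f)
    (x := FreeGroup.of 1 ^ p ^ (d + e - h) * (FreeGroup.of 0 ^ p ^ d)⁻¹) (by simp [M3rels])

lemma M3a_mul_M3b :
    M3a p d e h f * M3b p d e h f = M3b p d e h f * M3a p d e h f ^ (1 + p ^ f) := by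
  rw [← inv_mul_eq_iff_eq_mul, ← mul_inv_eq_one, ← mul_assoc]
  exact PresentedGroup.one_of_mem (rels := M3rels p d e h f)
    (x := (FreeGroup.of 1)⁻¹ * FreeGroup.of 0 * FreeGroup.of 1 *
      (FreeGroup.of 0 ^ (1 + p ^ f))⁻¹) (by simp [M3rels])

end Presentation

section Model

variable {p d e h f : ℕ}

/-- `M₃(p,d,e,h,f)` maps onto its quotient by `⟨a⟩`, which is cyclic of order `p ^ (d + e - h)`. -/
def M3toZMod (p d e h f : ℕ) : M3 p d e h f →* Multiplicative (ZMod (p ^ (d + e - h))) :=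
  PresentedGroup.toGroup (f := ![1, Multiplicative.ofAdd 1]) (by
    intro r hr
    simp only [M3rels, Set.mem_insert_iff, Set.mem_singleton_iff] at hr
    rcases hr with rfl | rfl | rfl
    · simp
    · simp [← ofAdd_nsmul]
    · simp)

lemma M3toZMod_zpow (i : ℤ) :
    M3toZMod p d e h f (M3b p d e h f ^ i) = Multiplicative.ofAdd (i : ZMod _) := by
  have : M3toZMod p d e h f (M3b p d e h f) = Multiplicative.ofAdd 1 :=
    PresentedGroup.toGroup.of _
  rw [map_zpow, this, ← ofAdd_zsmul]
  simp

lemma M3toZMod_left : M3toZMod p d e h f (M3a p d e h f) = 1 :=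
  PresentedGroup.toGroup.of _

/-- The affine map `x ↦ u * x - 1`. -/
def affinePerm {R : Type*} [Ring R] (u : Rˣ) : Equiv.Perm R :=
  (Units.mulLeft u).trans (Equiv.subRight 1)

lemma affinePerm_apply {R : Type*} [Ring R] (u : Rˣ) (x : R) :
    affinePerm u x = u * x - 1 := rfl

lemma affinePerm_pow {R : Type*} [Ring R] (u : Rˣ) (n : ℕ) (x : R) :
    (affinePerm u ^ n) x = (u : R) ^ n * x - ∑ i ∈ Finset.range n, (u : R) ^ i := by
  induction n with
  | zero => simp
  | succ n ih =>
    rw [pow_succ', Equiv.Perm.mul_apply, ih, affinePerm_apply, geom_sum_succ, pow_succ', mul_sub,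
      mul_assoc]
    abel

lemma addRight_pow_apply {R : Type*} [Ring R] (t : R) (n : ℕ) (x : R) :
    (Equiv.addRight t ^ n) x = x + n * t := by
  induction n with
  | zero => simp
  | succ n ih =>
    rw [pow_succ', Equiv.Perm.mul_apply, ih, Equiv.coe_addRight]
    push_cast
    rw [add_mul, one_mul, add_assoc]

/-- The affine action of `M₃(p,d,e,h,f)` on `ZMod (p ^ e)` in which `a` is translation by
`p ^ (e - h)` and `b⁻¹` is `x ↦ (1 + p ^ f) * x - 1`. -/
lemma exists_hom_perm (hodd : Odd p) (hf : 0 < f) (hhd : h ≤ d + f)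
    (hhe : h ≤ e) :
    ∃ φ : M3 p d e h f →* Equiv.Perm (ZMod (p ^ e)),
      φ (M3a p d e h f) = Equiv.addRight ((p : ZMod (p ^ e)) ^ (e - h)) := by
  have hpe : (p : ZMod (p ^ e)) ^ e = 0 := by exact_mod_cast ZMod.natCast_self (p ^ e)
  have hzero {n : ℕ} (hn : e ≤ n) : (p : ZMod (p ^ e)) ^ n = 0 := pow_eq_zero_of_le hn hpe
  have hu : IsUnit (1 + (p : ZMod (p ^ e)) ^ f) :=
    IsNilpotent.isUnit_one_add ⟨e, by
      rw [← pow_mul]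
      exact hzero (Nat.le_mul_of_pos_left e hf)⟩
  obtain ⟨u, hu⟩ := hu
  have hsum : ∑ i ∈ Finset.range (p ^ (d + e - h)), (u : ZMod (p ^ e)) ^ i = p ^ (d + e - h) := by
    obtain ⟨y, hy⟩ := pow_dvd_geom_sum_sub hodd hf (d + e - h) (1 + (p : ℤ) ^ f) (by simp)
    have := congrArg (Int.cast : ℤ → ZMod (p ^ e)) hy
    push_cast at this
    rw [← hu, hzero (n := d + e - h + f) (by omega), zero_mul, sub_eq_zero] at this
    exact this
  have hpow : (u : ZMod (p ^ e)) ^ p ^ (d + e - h) = 1 := by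
    have := geom_sum_mul (u : ZMod (p ^ e)) (p ^ (d + e - h))
    rw [hsum, hu, add_sub_cancel_left, ← pow_add, hzero (by omega), ← hu] at this
    exact sub_eq_zero.mp this.symm
  refine ⟨PresentedGroup.toGroup
    (f := ![Equiv.addRight ((p : ZMod (p ^ e)) ^ (e - h)), (affinePerm u)⁻¹]) ?_,
    PresentedGroup.toGroup.of _⟩
  intro r hr
  simp only [M3rels, Set.mem_insert_iff, Set.mem_singleton_iff] at hr
  rcases hr with rfl | rfl | rfl
  · ext1 x
    simp only [map_pow, FreeGroup.lift_apply_of, Matrix.cons_val_zero, addRight_pow_apply,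
      Equiv.Perm.one_apply]
    push_cast
    rw [← pow_add, hzero (by omega), add_zero]
  · simp only [map_mul, map_inv, map_pow, FreeGroup.lift_apply_of, Matrix.cons_val_zero,
      Matrix.cons_val_one, inv_pow]
    rw [← mul_inv_rev, inv_eq_one]
    ext1 x
    rw [Equiv.Perm.mul_apply, affinePerm_pow, addRight_pow_apply, hsum, hpow,
      Equiv.Perm.one_apply]
    push_cast
    rw [← pow_add, show d + (e - h) = d + e - h by omega]
    ring
  · simp only [map_mul, map_inv, map_pow, FreeGroup.lift_apply_of, Matrix.cons_val_zero,
      Matrix.cons_val_one, inv_inv]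
    rw [mul_inv_eq_one, mul_inv_eq_iff_eq_mul]
    ext1 x
    rw [Equiv.Perm.mul_apply, Equiv.Perm.mul_apply, addRight_pow_apply, affinePerm_apply,
      affinePerm_apply, Equiv.coe_addRight, hu]
    push_cast
    ring

lemma orderOf_M3a (hp : p.Prime) (hodd : Odd p) (hf : 0 < f) (hhd : h ≤ d + f) (hh : 0 < h)
    (hhe : h ≤ e) : orderOf (M3a p d e h f) = p ^ h := by
  have : Fact p.Prime := ⟨hp⟩
  obtain ⟨n, rfl⟩ : ∃ n, h = n + 1 := ⟨h - 1, by omega⟩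
  refine orderOf_eq_prime_pow (fun hcon => ?_) M3a_pow
  obtain ⟨φ, hφ⟩ := exists_hom_perm (d := d) hodd hf hhd hhe
  have h1 := congrArg (fun σ => φ σ 0) hcon
  simp only [map_pow, hφ, map_one, addRight_pow_apply, Equiv.Perm.one_apply, zero_add] at h1
  have h2 : ((p ^ n * p ^ (e - (n + 1)) : ℕ) : ZMod (p ^ e)) = 0 := by exact_mod_cast h1
  rw [ZMod.natCast_eq_zero_iff, ← pow_add, Nat.pow_dvd_pow_iff_le_right hp.one_lt] at h2
  omega

lemma M3_exists_eq (hp : p.Prime) (g : M3 p d e h f) :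
    ∃ i j : ℤ, g = M3b p d e h f ^ i * M3a p d e h f ^ j := by
  suffices hg : ∃ (i : ℕ) (j : ℤ), g = M3b p d e h f ^ i * M3a p d e h f ^ j by
    obtain ⟨i, j, h⟩ := hg
    exact ⟨i, j, by rw [h, zpow_natCast]⟩
  have hb : M3b p d e h f ^ (p ^ (d + e - h) * p ^ h) = 1 := by
    rw [pow_mul, M3b_pow, ← pow_mul, mul_comm, pow_mul, M3a_pow, one_pow]
  obtain ⟨n, hn⟩ : ∃ n, p ^ (d + e - h) * p ^ h = n + 1 :=
    Nat.exists_eq_succ_of_ne_zero (mul_ne_zero (pow_ne_zero _ hp.ne_zero) (pow_ne_zero _ hp.ne_zero))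
  have hbinv : (M3b p d e h f)⁻¹ = M3b p d e h f ^ n := by
    rw [inv_eq_iff_mul_eq_one, ← pow_succ', ← hn, hb]
  have ha (m : ℤ) (i : ℕ) (j : ℤ) : ∃ (i' : ℕ) (j' : ℤ),
      M3a p d e h f ^ m * (M3b p d e h f ^ i * M3a p d e h f ^ j) =
        M3b p d e h f ^ i' * M3a p d e h f ^ j' :=
    ⟨i, _, by rw [← mul_assoc, zpow_mul_pow_of_mul_eq M3a_mul_M3b, mul_assoc, ← zpow_add]⟩
  have hmem : g ∈ Subgroup.closure (Set.range (PresentedGroup.of (rels := M3rels p d e h f))) := by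
    rw [PresentedGroup.closure_range_of]
    trivial
  induction hmem using Subgroup.closure_induction_left with
  | one => exact ⟨0, 0, by simp⟩
  | mul_left x hx y _ ih =>
    obtain ⟨t, rfl⟩ := hx
    obtain ⟨i, j, rfl⟩ := ih
    fin_cases t
    · simpa [M3a] using ha 1 i j
    · exact ⟨i + 1, j, by rw [pow_succ', mul_assoc]; rfl⟩
  | inv_mul_cancel x hx y _ ih =>
    obtain ⟨t, rfl⟩ := hx
    obtain ⟨i, j, rfl⟩ := ih
    fin_cases t
    · simpa [M3a] using ha (-1) i j
    · refine ⟨n + i, j, ?_⟩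
      rw [pow_add, ← hbinv, mul_assoc]
      rfl

end Model

/-- For `h - d ≤ f < d < h < e`, the number of exact `(p^d,p^e)`-bicyclic
pairs of `M₃(p,d,e,h,f)` equals `p^(3d+e-2)(p-1)²`. -/
theorem stmt_10 (p d e h f : ℕ) (hp : p.Prime) (hodd : Odd p)
    (hf : 0 < f) (hhd : h - d ≤ f) (hfd : f < d) (hdh : d < h) (hhe : h < e) :
    Nat.card {x : M3 p d e h f × M3 p d e h f // IsExactBicyclicPair (p ^ d) (p ^ e) x.1 x.2} =
      p ^ (3 * d + e - 2) * (p - 1) ^ 2 := by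
  obtain ⟨c, rfl⟩ : ∃ c, d = c + 1 := ⟨d - 1, by omega⟩
  obtain ⟨l, rfl⟩ : ∃ l, h = c + 1 + l := ⟨h - (c + 1), by omega⟩
  obtain ⟨k, rfl⟩ : ∃ k, e = c + 1 + l + k := ⟨e - (c + 1 + l), by omega⟩
  have hN : c + 1 + (c + 1 + l + k) - (c + 1 + l) = c + 1 + k := by omega
  have H : IsM3Generators p c k l f (M3a p (c + 1) (c + 1 + l + k) (c + 1 + l) f)
      (M3b p (c + 1) (c + 1 + l + k) (c + 1 + l) f) :=
    { orderOf_left := orderOf_M3a hp hodd hf (by omega) (by omega) (by omega)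
      pow_right := by
        have := M3b_pow (p := p) (d := c + 1) (e := c + 1 + l + k) (h := c + 1 + l) (f := f)
        rwa [hN] at this
      mul_comm_rel := M3a_mul_M3b
      dvd_of_pow_mem := by
        intro i hi
        obtain ⟨j, hj⟩ := Subgroup.mem_zpowers_iff.mp hi
        have h1 := congrArg (M3toZMod _ _ _ _ _) hj
        rw [map_zpow, M3toZMod_left, one_zpow, M3toZMod_zpow, eq_comm, ofAdd_eq_one,
          ZMod.intCast_zmod_eq_zero_iff_dvd, hN] at h1
        exact_mod_cast h1
      exists_eq := M3_exists_eq hp }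
  exact H.card_isExactBicyclicPair hp hodd hf (by omega) (by omega) (by omega)
end
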